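/- arXiv:math/9707203 — 6 statements merged into one kernel-verified Lean document; each statement's English description precedes it below -/
import Mathlib

section
/- If L is an infinite lattice that is order polynomially complete, then the cardinality of L is a strongly inaccessible cardinal (i.e., |L| is uncountable, regular, and a strong limit cardinal). -/
universe u v w

open Cardinal

/-- A well-ordered chain: a chain whose induced strict order is well-founded. -/
def IsWellChain {L : Type u} [PartialOrder L] (A : Set L) : Prop :=
  IsChain (· ≤ ·) A ∧ A.WellFoundedOn (· < ·)

/-- A co-well-ordered chain: a chain well-ordered under the reverse order. -/
def IsCoWellChain {L : Type u} [PartialOrder L] (A : Set L) : Prop :=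
  IsChain (· ≤ ·) A ∧ A.WellFoundedOn (· > ·)

/-- A subset of a partial order is uniform if it is an antichain, a well-ordered chain,
or a co-well-ordered chain. -/
def IsUniform {L : Type u} [PartialOrder L] (A : Set L) : Prop :=
  IsAntichain (· ≤ ·) A ∨ IsWellChain A ∨ IsCoWellChain A

/-- `mu L` is the least cardinal `m` such that `L` has no uniform subset of cardinality `m`. -/
noncomputable def mu (L : Type u) [PartialOrder L] : Cardinal.{u} :=
  sInf {m : Cardinal.{u} | ¬ ∃ A : Set L, IsUniform A ∧ #A = m}

/-- `nu2 L₁ L₂` is the least cardinal `n` such that there is no family of `n` pairwise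
incomparable monotone functions from `L₁` to `L₂` (functions ordered pointwise). -/
noncomputable def nu2 (L₁ : Type u) (L₂ : Type v) [PartialOrder L₁] [PartialOrder L₂] :
    Cardinal.{max u v} :=
  sInf {n : Cardinal.{max u v} |
    ¬ ∃ S : Set (L₁ → L₂), (∀ f ∈ S, Monotone f) ∧ IsAntichain (· ≤ ·) S ∧ #S = n}

/-- `nu L = nu2 L L`. -/
noncomputable def nu (L : Type u) [PartialOrder L] : Cardinal.{u} := nu2 L L

/-- `muInf L = sup_{n} mu (Lⁿ)` for `n ≥ 1`. -/
noncomputable def muInf (L : Type u) [PartialOrder L] : Cardinal.{u} :=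
  ⨆ n : ℕ, mu (Fin (n + 1) → L)

/-- `nuInf L = sup_{n} nu (Lⁿ, L)` for `n ≥ 1`. -/
noncomputable def nuInf (L : Type u) [PartialOrder L] : Cardinal.{u} :=
  ⨆ n : ℕ, nu2 (Fin (n + 1) → L) L

/-- A function `(Fin n → L) → L` is a polynomial function if it lies in the smallest
sublattice of the function lattice containing all coordinate projections and all
constant functions. -/
def IsPolynomialFn (L : Type u) [Lattice L] (n : ℕ) (f : (Fin n → L) → L) : Prop :=
  f ∈ latticeClosure ({g : (Fin n → L) → L | ∃ i : Fin n, g = fun x => x i} ∪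
    {g : (Fin n → L) → L | ∃ c : L, g = fun _ => c})

/-- A lattice is order polynomially complete if for every `n ≥ 1` every monotone
`n`-ary function is a polynomial function. -/
def OPC (L : Type u) [Lattice L] : Prop :=
  ∀ n : ℕ, 1 ≤ n → ∀ f : (Fin n → L) → L, Monotone f → IsPolynomialFn L n f

/-- The three possible comparison types between distinct blocks of a canonical family. -/
inductive CompType : Type
  | lt
  | gt
  | incomp

/-- The relation on `L` associated to a comparison type. -/
def CompType.rel {L : Type u} [PartialOrder L] : CompType → L → L → Prop
  | .lt, a, b => a < b
  | .gt, a, b => b < a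
  | .incomp, a, b => ¬ a ≤ b ∧ ¬ b ≤ a

/-- A family of subsets of `L` is canonical if each member is uniform, all members are
of the same type, and comparison between elements of distinct members depends only on
the pair of indices. -/
def IsCanonical {L : Type u} [PartialOrder L] {ι : Type v} (A : ι → Set L) : Prop :=
  ((∀ i, IsAntichain (· ≤ ·) (A i)) ∨ (∀ i, IsWellChain (A i)) ∨ (∀ i, IsCoWellChain (A i))) ∧
  ∃ F : ι → ι → CompType, ∀ i j, i ≠ j → ∀ a ∈ A i, ∀ b ∈ A j, (F i j).rel a b

/-!
Let `m` be the least cardinal that is not the size of an antichain in a finite power of `L`.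

A polynomial function is a constant-free term function with constants plugged in. There are only
countably many term functions and they are monotone, so an antichain of monotone functions `Lⁿ → L`
whose size has uncountable cofinality, such as `2 ^ κ` with `κ ≥ ℵ₀`, yields an equally large
antichain of tuples of constants in some `Lᵏ`: its size is less than `m`.

`L` has a greatest element: every polynomial function satisfies `f (x, …, x) ≤ x` for all large `x`,
whereas without a greatest element some monotone function never does. Dually, `L` has a least
element. With these two values available, an antichain of size `κ ≥ ℵ₀` in `Lⁿ`, or a well-ordered
or co-well-ordered chain of size `κ` in `L`, carries `2 ^ κ` pairwise incomparable monotone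
functions. Hence `m` is an uncountable strong limit.

If `m` were singular, it would be a sum of fewer than `m` cardinals `κᵢ < m`. Gluing families of
`2 ^ κᵢ` incomparable functions on `L` along an antichain indexed by the `i` would give a family of
size at least `m`; so `m` is regular. If `m < |L|`, then by the Erdős–Rado theorem `L` would contain
an antichain, a well-ordered chain or a co-well-ordered chain of size `m`, and hence some power of
`L` an antichain of size `m`; so `m = |L|`.
-/

variable {L : Type u} {n : ℕ}

section PolynomialFunctions

variable [Lattice L]

namespace IsPolynomialFn

theorem proj (i : Fin n) : IsPolynomialFn L n fun x => x i :=
  subset_latticeClosure (Or.inl ⟨i, rfl⟩)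

theorem const (c : L) : IsPolynomialFn L n fun _ => c :=
  subset_latticeClosure (Or.inr ⟨c, rfl⟩)

theorem sup {f g : (Fin n → L) → L} (hf : IsPolynomialFn L n f) (hg : IsPolynomialFn L n g) :
    IsPolynomialFn L n (f ⊔ g) :=
  isSublattice_latticeClosure.supClosed hf hg

theorem inf {f g : (Fin n → L) → L} (hf : IsPolynomialFn L n f) (hg : IsPolynomialFn L n g) :
    IsPolynomialFn L n (f ⊓ g) :=
  isSublattice_latticeClosure.infClosed hf hg

@[elab_as_elim]
theorem induction {p : ∀ f, IsPolynomialFn L n f → Prop} (proj : ∀ i, p _ (proj i))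
    (const : ∀ c, p _ (const c))
    (sup : ∀ f hf g hg, p f hf → p g hg → p (f ⊔ g) (sup hf hg))
    (inf : ∀ f hf g hg, p f hf → p g hg → p (f ⊓ g) (inf hf hg))
    {f : (Fin n → L) → L} (hf : IsPolynomialFn L n f) : p f hf := by
  refine latticeClosure_sup_inf_induction (p := p) ?_ sup inf hf
  rintro _ (⟨i, rfl⟩ | ⟨c, rfl⟩)
  exacts [proj i, const c]

theorem dual {f : (Fin n → L) → L} (hf : IsPolynomialFn L n f) :
    IsPolynomialFn Lᵒᵈ n fun x => OrderDual.toDual (f fun i => OrderDual.ofDual (x i)) := by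
  induction hf using IsPolynomialFn.induction with
  | proj i => exact .proj i
  | const c => exact .const (OrderDual.toDual c)
  | sup f _ g _ hf hg => exact hf.inf hg
  | inf f _ g _ hf hg => exact hf.sup hg

theorem eventually_diag_le [Nonempty L] {f : (Fin n → L) → L} (hf : IsPolynomialFn L n f) :
    ∀ᶠ x in Filter.atTop, f (fun _ => x) ≤ x := by
  induction hf using IsPolynomialFn.induction with
  | proj i => exact .of_forall fun _ => le_rfl
  | const c => exact Filter.eventually_ge_atTop c
  | sup f _ g _ hf hg => filter_upwards [hf, hg] with x hfx hgx using sup_le hfx hgx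
  | inf f _ g _ hf _ => filter_upwards [hf] with x hfx using inf_le_of_left_le hfx

end IsPolynomialFn

theorem OPC.isPolynomialFn (h : OPC L) {f : (Fin n → L) → L} (hf : Monotone f) :
    IsPolynomialFn L n f := by
  obtain rfl | hn := n.eq_zero_or_pos
  · convert IsPolynomialFn.const (f default)
  · exact h n hn f hf

theorem OPC.dual (h : OPC L) : OPC Lᵒᵈ := by
  intro n hn f hf
  have hg : Monotone fun x : Fin n → L =>
      OrderDual.ofDual (f fun i => OrderDual.toDual (x i)) := fun x y hxy => hf hxy
  exact (h n hn _ hg).dual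

/-! ### Boundedness -/

/- A maximal chain `C` is cofinal but has no upper bound. Well-order `C` arbitrarily and send `x`
to the first member of `C` that is not below `x`. -/
theorem exists_monotone_forall_not_le {P : Type u} [PartialOrder P] [IsDirectedOrder P]
    [NoTopOrder P] : ∃ f : P →o P, ∀ x, ¬ f x ≤ x := by
  obtain ⟨C, hC, hunb⟩ : ∃ C : Set P, IsChain (· ≤ ·) C ∧ ¬ BddAbove C := by
    by_contra! hbdd
    obtain ⟨t, ht⟩ := zorn_le fun C hC => hbdd C hC
    exact not_isTop t ht.isTop
  have hne (x : P) : {c ∈ C | ¬ c ≤ x}.Nonempty := by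
    by_contra! hempty
    exact hunb ⟨x, fun c hc => by_contra fun hcx => hempty.subset ⟨hc, hcx⟩⟩
  have wf : WellFounded (WellOrderingRel : P → P → Prop) := IsWellFounded.wf
  choose f hfC hfx hf using fun x => show ∃ c ∈ C, ¬ c ≤ x ∧
      ∀ d ∈ C, WellOrderingRel d c → d ≤ x from
    ⟨wf.min _ (hne x), (wf.min_mem _ (hne x)).1, (wf.min_mem _ (hne x)).2, fun d hd hlt =>
      by_contra fun hdx => wf.not_lt_min {c ∈ C | ¬ c ≤ x} ⟨hd, hdx⟩ hlt⟩
  refine ⟨⟨f, fun x y hxy => ?_⟩, hfx⟩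
  rcases trichotomous_of WellOrderingRel (f x) (f y) with hlt | heq | hgt
  · have hxy' : f x ≤ y := hf y _ (hfC x) hlt
    exact (hC.total (hfC x) (hfC y)).resolve_right fun hle => hfx y (hle.trans hxy')
  · exact heq.le
  · exact absurd ((hf x _ (hfC y) hgt).trans hxy) (hfx y)

theorem OPC.exists_isTop [Nonempty L] (h : OPC L) : ∃ t : L, IsTop t := by
  by_contra! hno
  have : NoTopOrder L := ⟨fun a => not_forall.1 (hno a)⟩
  obtain ⟨f, hf⟩ := exists_monotone_forall_not_le (P := L)
  have hpoly : IsPolynomialFn L 1 fun x => f (x 0) :=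
    h.isPolynomialFn fun x y hxy => f.monotone (hxy 0)
  obtain ⟨x, hx⟩ := hpoly.eventually_diag_le.exists
  exact hf x hx

theorem OPC.exists_isBot [Nonempty L] (h : OPC L) : ∃ b : L, IsBot b :=
  h.dual.exists_isTop

/-! ### Term functions and constants -/

theorem countable_latticeClosure {α : Type v} [Lattice α] {s : Set α} (hs : s.Countable) :
    (latticeClosure s).Countable := by
  let step (t : Set α) : Set α := t ∪ (Set.image2 (· ⊔ ·) t t ∪ Set.image2 (· ⊓ ·) t t)
  let t (k : ℕ) : Set α := step^[k] s
  have ht_succ (k : ℕ) : t (k + 1) = step (t k) := Function.iterate_succ_apply' step k s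
  have ht_mono : Monotone t :=
    monotone_nat_of_le_succ fun k => ht_succ k ▸ Set.subset_union_left
  have ht_countable (k : ℕ) : (t k).Countable := by
    induction k with
    | zero => exact hs
    | succ k ih =>
      rw [ht_succ]
      exact ih.union ((ih.image2 ih _).union (ih.image2 ih _))
  have hdirected {a b : α} (ha : a ∈ ⋃ k, t k) (hb : b ∈ ⋃ k, t k) : ∃ k, a ∈ t k ∧ b ∈ t k := by
    obtain ⟨i, hi⟩ := Set.mem_iUnion.1 ha
    obtain ⟨j, hj⟩ := Set.mem_iUnion.1 hb
    exact ⟨max i j, ht_mono (le_max_left i j) hi, ht_mono (le_max_right i j) hj⟩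
  have hclosed : IsSublattice (⋃ k, t k) := by
    refine ⟨fun a ha b hb => ?_, fun a ha b hb => ?_⟩ <;>
      obtain ⟨k, hak, hbk⟩ := hdirected ha hb <;>
      refine Set.mem_iUnion.2 ⟨k + 1, ht_succ k ▸ Or.inr ?_⟩
    exacts [Or.inl (Set.mem_image2_of_mem hak hbk), Or.inr (Set.mem_image2_of_mem hak hbk)]
  exact (Set.countable_iUnion ht_countable).mono
    (latticeClosure_min (Set.subset_iUnion t 0) hclosed)

/-- Term functions: the functions in variables indexed by `ι` that are built from the variables
by the lattice operations, without constants. Unlike polynomial functions they are countable in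
number when `ι` is, and a polynomial function is one of them with constants plugged in. -/
def IsTermFn (L : Type u) [Lattice L] (ι : Type v) (g : (ι → L) → L) : Prop :=
  g ∈ latticeClosure (Set.range fun (i : ι) (x : ι → L) => x i)

namespace IsTermFn

variable {ι : Type v} {κ : Type w}

theorem proj (i : ι) : IsTermFn L ι fun x => x i :=
  subset_latticeClosure ⟨i, rfl⟩

theorem sup {f g : (ι → L) → L} (hf : IsTermFn L ι f) (hg : IsTermFn L ι g) :
    IsTermFn L ι (f ⊔ g) :=
  isSublattice_latticeClosure.supClosed hf hg

theorem inf {f g : (ι → L) → L} (hf : IsTermFn L ι f) (hg : IsTermFn L ι g) :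
    IsTermFn L ι (f ⊓ g) :=
  isSublattice_latticeClosure.infClosed hf hg

@[elab_as_elim]
theorem induction {p : ∀ f, IsTermFn L ι f → Prop} (proj : ∀ i, p _ (proj i))
    (sup : ∀ f hf g hg, p f hf → p g hg → p (f ⊔ g) (sup hf hg))
    (inf : ∀ f hf g hg, p f hf → p g hg → p (f ⊓ g) (inf hf hg))
    {f : (ι → L) → L} (hf : IsTermFn L ι f) : p f hf := by
  refine latticeClosure_sup_inf_induction (p := p) ?_ sup inf hf
  rintro _ ⟨i, rfl⟩
  exact proj i

theorem monotone {f : (ι → L) → L} (hf : IsTermFn L ι f) : Monotone f := by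
  induction hf using IsTermFn.induction with
  | proj i => exact fun _ _ hxy => hxy i
  | sup f _ g _ hf hg => exact hf.sup hg
  | inf f _ g _ hf hg => exact hf.inf hg

theorem reindex {f : (ι → L) → L} (hf : IsTermFn L ι f) (e : ι → κ) :
    IsTermFn L κ fun x => f (x ∘ e) := by
  induction hf using IsTermFn.induction with
  | proj i => exact .proj (e i)
  | sup f _ g _ hf hg => exact hf.sup hg
  | inf f _ g _ hf hg => exact hf.inf hg

theorem countable [Countable ι] : {g | IsTermFn L ι g}.Countable :=
  countable_latticeClosure (Set.countable_range _)

end IsTermFn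

theorem IsPolynomialFn.exists_isTermFn {f : (Fin n → L) → L} (hf : IsPolynomialFn L n f) :
    ∃ (k : ℕ) (g : (Fin n ⊕ Fin k → L) → L) (c : Fin k → L),
      IsTermFn L (Fin n ⊕ Fin k) g ∧ f = fun x => g (Sum.elim x c) := by
  have append {k l : ℕ} (c : Fin k → L) (d : Fin l → L) (x : Fin n → L) :
      Sum.elim x (Fin.append c d) ∘ Sum.map id (Fin.castAdd l) = Sum.elim x c ∧
        Sum.elim x (Fin.append c d) ∘ Sum.map id (Fin.natAdd k) = Sum.elim x d := by
    simp only [Sum.elim_comp_map]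
    constructor <;> congr 1 <;> ext i <;> simp
  induction hf using IsPolynomialFn.induction with
  | proj i => exact ⟨0, _, Fin.elim0, .proj (.inl i), rfl⟩
  | const c => exact ⟨1, _, fun _ => c, .proj (.inr 0), rfl⟩
  | sup _ _ _ _ hf hg =>
    obtain ⟨k, f, c, hf, rfl⟩ := hf
    obtain ⟨l, g, d, hg, rfl⟩ := hg
    refine ⟨k + l, _, Fin.append c d,
      (hf.reindex (Sum.map id (Fin.castAdd l))).sup (hg.reindex (Sum.map id (Fin.natAdd k))), ?_⟩
    funext x
    simp only [Pi.sup_apply, append]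
  | inf _ _ _ _ hf hg =>
    obtain ⟨k, f, c, hf, rfl⟩ := hf
    obtain ⟨l, g, d, hg, rfl⟩ := hg
    refine ⟨k + l, _, Fin.append c d,
      (hf.reindex (Sum.map id (Fin.castAdd l))).inf (hg.reindex (Sum.map id (Fin.natAdd k))), ?_⟩
    funext x
    simp only [Pi.inf_apply, append]

end PolynomialFunctions

/-! ### Sizes of antichains -/

/-- `P` has an antichain of cardinality exactly `κ`. For `P = Q →o M` this says that there are `κ`
pairwise incomparable monotone functions from `Q` to `M`. -/
def HasAntichain (P : Type u) [LE P] (κ : Cardinal.{u}) : Prop :=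
  ∃ s : Set P, IsAntichain (· ≤ ·) s ∧ #s = κ

section HasAntichain

variable {P Q M K : Type u} {κ : Cardinal.{u}}

theorem hasAntichain_mk_iff [Preorder P] :
    HasAntichain P #K ↔ ∃ a : K → P, ∀ i j, a i ≤ a j → i = j := by
  constructor
  · rintro ⟨s, hs, hsK⟩
    obtain ⟨e⟩ := Cardinal.eq.1 hsK
    exact ⟨fun i => e.symm i, fun i j hij =>
      e.symm.injective (Subtype.ext (hs.eq (e.symm i).2 (e.symm j).2 hij))⟩
  · rintro ⟨a, ha⟩
    refine ⟨Set.range a, ?_, mk_range_eq a fun i j hij => ha i j hij.le⟩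
    rintro _ ⟨i, rfl⟩ _ ⟨j, rfl⟩ hne hij
    exact hne (congrArg a (ha i j hij))

namespace HasAntichain

theorem mono [LE P] (h : HasAntichain P κ) {μ : Cardinal.{u}} (hμ : μ ≤ κ) :
    HasAntichain P μ := by
  obtain ⟨s, hs, rfl⟩ := h
  obtain ⟨t, hts, ht⟩ := le_mk_iff_exists_subset.1 hμ
  exact ⟨t, hs.subset hts, ht⟩

theorem le_mk [LE P] (h : HasAntichain P κ) : κ ≤ #P := by
  obtain ⟨s, -, rfl⟩ := h
  exact mk_set_le s

theorem dual [LE P] (h : HasAntichain P κ) : HasAntichain Pᵒᵈ κ := by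
  obtain ⟨s, hs, rfl⟩ := h
  exact ⟨OrderDual.ofDual ⁻¹' s, fun a ha b hb hne hba => hs hb ha hne.symm hba, rfl⟩

theorem map_of_le_imp_le [Preorder P] [Preorder Q] (h : HasAntichain P κ) (f : P → Q)
    (hf : ∀ x y, f x ≤ f y → x ≤ y) : HasAntichain Q κ := by
  induction κ using Cardinal.inductionOn with | mk K =>
  obtain ⟨a, ha⟩ := hasAntichain_mk_iff.1 h
  exact hasAntichain_mk_iff.2 ⟨f ∘ a, fun i j hij => ha i j (hf _ _ hij)⟩

theorem pi {P : K → Type u} [∀ k, Preorder (P k)] {κ : K → Cardinal.{u}}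
    (h : ∀ k, HasAntichain (P k) (κ k)) : HasAntichain (∀ k, P k) (prod κ) := by
  choose s hs hsκ using h
  have hprod : prod κ = #(∀ k, s k) := by rw [mk_pi, ← funext hsκ]
  rw [hprod, hasAntichain_mk_iff]
  exact ⟨fun a k => a k, fun a b hab =>
    funext fun k => Subtype.ext ((hs k).eq (a k).2 (b k).2 (hab k))⟩

/- `S ↦ S ⊕ Sᶜ` turns all subsets of `K` into an antichain of subsets of `K ⊕ K`. -/
theorem set (K : Type u) [Infinite K] : HasAntichain (Set K) (2 ^ #K) := by
  obtain ⟨e⟩ : Nonempty (K ⊕ K ≃ K) := by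
    rw [← Cardinal.eq, mk_sum, lift_id, add_eq_self (aleph0_le_mk K)]
  rw [← mk_set]
  refine hasAntichain_mk_iff.2 ⟨fun S => e.symm ⁻¹' (Sum.inl '' S ∪ Sum.inr '' Sᶜ),
    fun S T hST => ?_⟩
  have hST' : Sum.inl '' S ∪ Sum.inr '' Sᶜ ⊆ Sum.inl '' T ∪ Sum.inr '' Tᶜ :=
    e.symm.surjective.preimage_subset_preimage_iff.1 hST
  refine Set.Subset.antisymm (fun k hk => ?_) fun k hk => ?_
  · simpa using hST' (Or.inl ⟨k, hk, rfl⟩)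
  · by_contra hkS
    have hkT : k ∉ T := by simpa using hST' (Or.inr ⟨k, hkS, rfl⟩)
    exact hkT hk

end HasAntichain

/-! ### Incomparable monotone functions from antichains -/

theorem exists_orderHom_extend_antichain [PartialOrder P] [PartialOrder M] [OrderTop M]
    [OrderBot M] {a : K → P} (ha : ∀ i j, a i ≤ a j → i = j) (g : K → M) :
    ∃ f : P →o M, ∀ i, f (a i) = g i := by
  classical
  have hinj : Function.Injective a := fun i j hij => ha i j hij.le
  let f (x : P) : M := if ∃ i, a i < x then ⊤ else Function.extend a g ⊥ x
  have hf_top {x y : P} (hxy : x < y) (hx : ∃ i, a i ≤ x) : f y = ⊤ :=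
    if_pos (hx.imp fun i hi => hi.trans_lt hxy)
  have hf_bot {x : P} (hx : ¬ ∃ i, a i ≤ x) : f x = ⊥ := by
    simp only [f]
    rw [if_neg fun ⟨i, hi⟩ => hx ⟨i, hi.le⟩,
      Function.extend_apply' _ _ _ fun ⟨i, hi⟩ => hx ⟨i, hi.le⟩, Pi.bot_apply]
  refine ⟨⟨f, fun x y hxy => ?_⟩, fun i => ?_⟩
  · obtain rfl | hlt := hxy.eq_or_lt
    · exact le_rfl
    by_cases hx : ∃ i, a i ≤ x
    · exact hf_top hlt hx ▸ le_top
    · exact hf_bot hx ▸ bot_le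
  · have hmin : ¬ ∃ j, a j < a i := fun ⟨j, hj⟩ => hj.ne (congrArg a (ha j i hj.le))
    exact (if_neg hmin).trans (hinj.extend_apply _ _ _)

namespace HasAntichain

theorem orderHom_of_pi [PartialOrder P] [PartialOrder M] [OrderTop M] [OrderBot M]
    (hP : HasAntichain P #K) (hM : HasAntichain (K → M) κ) : HasAntichain (P →o M) κ := by
  obtain ⟨a, ha⟩ := hasAntichain_mk_iff.1 hP
  choose f hf using exists_orderHom_extend_antichain (M := M) ha
  exact hM.map_of_le_imp_le f fun g g' hle i => hf g i ▸ hf g' i ▸ hle (a i)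

theorem orderHom_two_power [PartialOrder P] [PartialOrder M] [BoundedOrder M] [Nontrivial M]
    (hP : HasAntichain P κ) (hκ : ℵ₀ ≤ κ) : HasAntichain (P →o M) (2 ^ κ) := by
  classical
  induction κ using Cardinal.inductionOn with | mk K =>
  have : Infinite K := infinite_iff.2 hκ
  refine hP.orderHom_of_pi ((HasAntichain.set K).map_of_le_imp_le
    (fun S i => if i ∈ S then ⊤ else ⊥) fun S T hST i hi => ?_)
  by_contra hiT
  simpa [hi, hiT] using hST i

theorem orderHom_prod [PartialOrder P] [PartialOrder Q] [PartialOrder M] [OrderTop M]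
    [OrderBot M] {κ : K → Cardinal.{u}} (hP : HasAntichain P #K)
    (hQ : ∀ i, HasAntichain (Q →o M) (κ i)) :
    HasAntichain (P × Q →o M) (prod κ) :=
  (hP.orderHom_of_pi (HasAntichain.pi hQ)).map_of_le_imp_le OrderHom.curry.symm
    fun _ _ => OrderHom.curry.symm.le_iff_le.1

end HasAntichain

end HasAntichain

/-! ### Incomparable monotone functions from chains -/

section Chains

variable {P M I : Type u} [LinearOrder I]

theorem exists_orderHom_extend_wellOrder [WellFoundedLT I] [PartialOrder P] [PartialOrder M]
    [OrderTop M] (c : I ↪o P) (g : I →o M) : ∃ f : P →o M, ∀ i, f (c i) = g i := by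
  classical
  have wf : WellFounded ((· < ·) : I → I → Prop) := wellFounded_lt
  let f (x : P) : M := if h : {i | x ≤ c i}.Nonempty then g (wf.min _ h) else ⊤
  have hf_le {x : P} {i : I} (hi : x ≤ c i) : f x ≤ g i := by
    have hne : {i | x ≤ c i}.Nonempty := ⟨i, hi⟩
    have hfx : f x = g (wf.min _ hne) := dif_pos hne
    exact hfx.trans_le (g.monotone (wf.min_le hi))
  have hf_ge {x : P} {m : M} (hm : ∀ i, x ≤ c i → m ≤ g i) : m ≤ f x := by
    simp only [f]
    split_ifs with h
    exacts [hm _ (wf.min_mem _ h), le_top]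
  exact ⟨⟨f, fun x y hxy => hf_ge fun i hi => hf_le (hxy.trans hi)⟩, fun i =>
    (hf_le le_rfl).antisymm (hf_ge fun j hij => g.monotone (c.le_iff_le.1 hij))⟩

theorem mk_setOf_not_isMax [Infinite I] : #{i : I | ¬ IsMax i} = #I := by
  have hsub : {i : I | IsMax i}.Subsingleton := fun i hi j hj =>
    (le_total i j).elim (fun h => h.antisymm (hi h)) fun h => (hj h).antisymm h
  exact mk_compl_of_infinite _ (hsub.finite.lt_aleph0.trans_le (aleph0_le_mk I))

theorem hasAntichain_orderHom_wellOrder [WellFoundedLT I] [Infinite I] :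
    HasAntichain (I →o I) (2 ^ #I) := by
  classical
  let _ : SuccOrder I := SuccOrder.ofLinearWellFoundedLT I
  let N : Set I := {i | ¬ IsMax i}
  let shift (S : Set N) (i : I) : I := if i ∈ Subtype.val '' S then Order.succ i else i
  have hle_shift (S : Set N) (i : I) : i ≤ shift S i := by
    simp only [shift]
    split_ifs
    exacts [Order.le_succ i, le_rfl]
  have hshift_le (S : Set N) (i : I) : shift S i ≤ Order.succ i := by
    simp only [shift]
    split_ifs
    exacts [le_rfl, Order.le_succ i]
  have hshift_mono (S : Set N) : Monotone (shift S) := monotone_iff_forall_lt.2 fun i j hij =>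
    (hshift_le S i).trans ((Order.succ_le_of_lt hij).trans (hle_shift S j))
  have : Infinite N := infinite_iff.2 (mk_setOf_not_isMax (I := I) ▸ aleph0_le_mk I)
  rw [← mk_setOf_not_isMax]
  refine (HasAntichain.set N).map_of_le_imp_le (fun S => ⟨shift S, hshift_mono S⟩)
    fun S T hST i hi => ?_
  by_contra hiT
  have hS : shift S i = Order.succ (i : I) := if_pos (Set.mem_image_of_mem _ hi)
  have hT : shift T i = i := if_neg (Subtype.val_injective.mem_set_image.not.2 hiT)
  have hle : shift S i ≤ shift T i := hST i
  rw [hS, hT] at hle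
  exact (Order.lt_succ_of_not_isMax i.2).not_ge hle

theorem IsWellChain.hasAntichain_orderHom [PartialOrder P] [OrderTop P] {A : Set P}
    (hA : IsWellChain A) (hinf : A.Infinite) : HasAntichain (P →o P) (2 ^ #A) := by
  classical
  let _ : LinearOrder A := hA.1.linearOrder
  have : WellFoundedLT A := ⟨hA.2⟩
  have : Infinite A := hinf.to_subtype
  let c : A ↪o P := OrderEmbedding.subtype (· ∈ A)
  choose f hf using fun g : A →o A => exists_orderHom_extend_wellOrder c (c.toOrderHom.comp g)
  refine hasAntichain_orderHom_wellOrder.map_of_le_imp_le f fun g g' hle i => ?_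
  have := hle (c i)
  rw [hf g, hf g'] at this
  exact this

theorem IsCoWellChain.hasAntichain_orderHom [PartialOrder P] [OrderBot P] {A : Set P}
    (hA : IsCoWellChain A) (hinf : A.Infinite) : HasAntichain (P →o P) (2 ^ #A) := by
  have hdual : IsWellChain (OrderDual.ofDual ⁻¹' A) := ⟨hA.1.symm, hA.2⟩
  exact (hdual.hasAntichain_orderHom hinf).dual.map_of_le_imp_le (OrderHom.dualIso P P).symm
    fun _ _ => (OrderHom.dualIso P P).symm.le_iff_le.1

theorem IsUniform.hasAntichain_orderHom [PartialOrder P] [BoundedOrder P] {A : Set P}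
    (hA : IsUniform A) (hinf : A.Infinite) : HasAntichain (P →o P) (2 ^ #A) := by
  rcases hA with hA | hA | hA
  · have : Infinite A := hinf.to_subtype
    have : Nontrivial P := Set.nontrivial_univ_iff.1 (hinf.nontrivial.mono (Set.subset_univ A))
    exact HasAntichain.orderHom_two_power ⟨A, hA, rfl⟩ (aleph0_le_mk A)
  · exact hA.hasAntichain_orderHom hinf
  · exact hA.hasAntichain_orderHom hinf

end Chains

/-! ### Large uniform subsets -/

section CompType

variable {P : Type u} [PartialOrder P]

theorem CompType.exists_rel {a b : P} (h : a ≠ b) : ∃ T : CompType, T.rel a b := by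
  by_cases hab : a ≤ b
  · exact ⟨.lt, hab.lt_of_ne h⟩
  by_cases hba : b ≤ a
  · exact ⟨.gt, hba.lt_of_ne h.symm⟩
  · exact ⟨.incomp, hab, hba⟩

theorem CompType.rel_congr {a b a' b' : P} (hle : a ≤ b ↔ a' ≤ b') (hge : b ≤ a ↔ b' ≤ a') :
    (T : CompType) → (T.rel a b ↔ T.rel a' b')
  | .lt => by simp only [CompType.rel, lt_iff_le_not_ge, hle, hge]
  | .gt => by simp only [CompType.rel, lt_iff_le_not_ge, hle, hge]
  | .incomp => by simp only [CompType.rel, hle, hge]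

variable {J : Type v} [LinearOrder J] {f : J → P} {T : CompType}

theorem injective_of_compType_rel (h : ∀ i j, i < j → T.rel (f i) (f j)) :
    Function.Injective f := by
  refine .of_lt_imp_ne fun i j hij heq => ?_
  have hT : T.rel (f j) (f j) := by simpa only [heq] using h i j hij
  cases T with
  | lt | gt => exact lt_irrefl _ hT
  | incomp => exact hT.1 le_rfl

theorem isUniform_range_of_compType_rel [WellFoundedLT J]
    (h : ∀ i j, i < j → T.rel (f i) (f j)) : IsUniform (Set.range f) := by
  cases T with
  | lt =>
    have hf : StrictMono f := h
    exact .inr (.inl ⟨hf.monotone.isChain_range, Set.wellFoundedOn_range.2 <|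
      (wellFounded_lt (α := J)).mono fun _ _ => hf.lt_iff_lt.1⟩)
  | gt =>
    have hf : StrictAnti f := h
    exact .inr (.inr ⟨hf.antitone.isChain_range, Set.wellFoundedOn_range.2 <|
      (wellFounded_lt (α := J)).mono fun _ _ => hf.lt_iff_gt.1⟩)
  | incomp =>
    refine .inl ?_
    rintro _ ⟨i, rfl⟩ _ ⟨j, rfl⟩ hne hle
    rcases lt_trichotomy i j with hij | rfl | hij
    exacts [(h i j hij).1 hle, hne rfl, (h j i hij).2 hle]

end CompType

theorem exists_infinite_isUniform (P : Type u) [PartialOrder P] [Infinite P] :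
    ∃ A : Set P, IsUniform A ∧ A.Infinite := by
  suffices ∃ (f : ℕ → P) (T : CompType), ∀ i j, i < j → T.rel (f i) (f j) by
    obtain ⟨f, T, h⟩ := this
    exact ⟨_, isUniform_range_of_compType_rel h,
      Set.infinite_range_of_injective (injective_of_compType_rel h)⟩
  let a : ℕ ↪ P := Infinite.natEmbedding P
  obtain ⟨g, hlt | hnlt⟩ := exists_increasing_or_nonincreasing_subseq (· < ·) a
  · exact ⟨fun i => a (g i), .lt, hlt⟩
  obtain ⟨g', hgt | hngt⟩ := exists_increasing_or_nonincreasing_subseq (· > ·) fun i => a (g i)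
  · exact ⟨fun i => a (g (g' i)), .gt, hgt⟩
  refine ⟨fun i => a (g (g' i)), .incomp, fun i j hij => ?_⟩
  have hne : a (g (g' i)) ≠ a (g (g' j)) := by simpa using hij.ne
  exact ⟨fun hle => hnlt _ _ (g'.strictMono hij) (hle.lt_of_ne hne),
    fun hge => hngt _ _ hij (hge.lt_of_ne hne.symm)⟩

section ErdosRado

variable {P : Type u} {I : Type v} {γ : Type w} [Preorder I] [WellFoundedLT I]

/- `e x i` is the first element, in a fixed well-order of `P`, that receives from all earlier
`e x j` the colour that `x` does. -/
theorem exists_branch (c : P → P → γ) : ∃ e : P → I → P,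
    (∀ x i j, i < j → c (e x i) (e x j) = c (e x i) x) ∧
      ∀ x y i, (∀ j < i, c (e x j) x = c (e y j) y) → e x i = e y i := by
  have wfI : WellFounded ((· < ·) : I → I → Prop) := wellFounded_lt
  have wfP : WellFounded (WellOrderingRel : P → P → Prop) := IsWellFounded.wf
  let e (x : P) : I → P := wfI.fix fun i prev =>
    wfP.min {y | ∀ j hj, c (prev j hj) y = c (prev j hj) x} ⟨x, fun _ _ => rfl⟩
  have he (x : P) (i : I) :
      e x i = wfP.min {y | ∀ j < i, c (e x j) y = c (e x j) x} ⟨x, fun _ _ => rfl⟩ :=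
    wfI.fix_eq _ i
  refine ⟨e, fun x i j hij => ?_, fun x y i hxy => ?_⟩
  · have hmem := wfP.min_mem {y | ∀ k < j, c (e x k) y = c (e x k) x} ⟨x, fun _ _ => rfl⟩
    rw [← he x j] at hmem
    exact hmem i hij
  · induction i using wfI.induction with
    | h i ih =>
      have heq (j : I) (hj : j < i) : e x j = e y j :=
        ih j hj fun k hk => hxy k (hk.trans hj)
      have hset : {z | ∀ j < i, c (e x j) z = c (e x j) x} =
          {z | ∀ j < i, c (e y j) z = c (e y j) y} :=
        Set.ext fun z => forall₂_congr fun j hj => by rw [hxy j hj, heq j hj]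
      rw [he x, he y]
      congr 1

theorem exists_endHomogeneous (c : P → P → γ)
    (h : IsEmpty (P ↪ Σ i : I, (Set.Iio i → γ))) :
    ∃ (x : P) (e : I → P), (∀ i, e i ≠ x) ∧ ∀ i j, i < j → c (e i) (e j) = c (e i) x := by
  obtain ⟨e, hhom, hagree⟩ := exists_branch (I := I) c
  suffices ∃ x, ∀ i, e x i ≠ x by
    obtain ⟨x, hx⟩ := this
    exact ⟨x, e x, hx, hhom x⟩
  by_contra! hall
  choose rank hrank using hall
  refine h.false ⟨fun x => ⟨rank x, fun j => c (e x j) x⟩, fun x y hxy => ?_⟩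
  have hx := hrank x
  have hy := hrank y
  obtain ⟨hrank_eq, hcol⟩ := Sigma.mk.inj hxy
  generalize rank x = i, rank y = j at hrank_eq hcol hx hy
  subst hrank_eq
  have heq : e x i = e y i := hagree x y i fun j hj => congrFun (eq_of_heq hcol) ⟨j, hj⟩
  exact hx.symm.trans (heq.trans hy)

end ErdosRado

theorem isEmpty_embedding_sigma_of_two_powerlt_lt {P : Type u} {κ : Cardinal.{u}} (hκ : ℵ₀ ≤ κ)
    (hP : 2 ^< κ < #P) : IsEmpty (P ↪ Σ i : κ.ord.ToType, (Set.Iio i → Prop × Prop)) := by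
  have hκ_le : κ ≤ 2 ^< κ := le_of_forall_lt fun μ hμ => (cantor μ).trans_le (le_powerlt 2 hμ)
  have hsq : 2 ^< κ * 2 ^< κ = 2 ^< κ := mul_eq_self (hκ.trans hκ_le)
  have hcolourings (i : κ.ord.ToType) : #(Set.Iio i → Prop × Prop) ≤ 2 ^< κ := by
    have hIio : #(Set.Iio i) < κ := by simpa using mk_Iio_lt i (by simp)
    have hset : #(Set (Set.Iio i)) ≤ 2 ^< κ := mk_set.trans_le (le_powerlt 2 hIio)
    calc #(Set.Iio i → Prop × Prop)
        = #(Set (Set.Iio i)) * #(Set (Set.Iio i)) := by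
          rw [mul_def]
          exact mk_congr (Equiv.arrowProdEquivProdArrow _ _ _)
      _ ≤ 2 ^< κ := (mul_le_mul' hset hset).trans hsq.le
  refine ⟨fun φ => hP.not_ge ?_⟩
  calc #P ≤ #(Σ i : κ.ord.ToType, (Set.Iio i → Prop × Prop)) := ⟨φ⟩
    _ = sum fun i : κ.ord.ToType => #(Set.Iio i → Prop × Prop) := mk_sigma _
    _ ≤ #κ.ord.ToType * 2 ^< κ := (sum_le_sum _ _ hcolourings).trans_eq (sum_const' _ _)
    _ ≤ 2 ^< κ := by
      rw [mk_ord_toType]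
      exact (mul_le_mul' hκ_le le_rfl).trans hsq.le

theorem exists_isUniform_of_two_powerlt_lt {P : Type u} [PartialOrder P] {κ : Cardinal.{u}}
    (hκ : κ.IsRegular) (hP : 2 ^< κ < #P) : ∃ A : Set P, IsUniform A ∧ #A = κ := by
  let I := κ.ord.ToType
  have hI : #I = κ := by simp [I]
  obtain ⟨x, e, hne, hhom⟩ := exists_endHomogeneous (fun a b : P => (a ≤ b, b ≤ a))
    (isEmpty_embedding_sigma_of_two_powerlt_lt hκ.aleph0_le hP)
  obtain ⟨⟨p, q⟩, hH⟩ := infinite_pigeonhole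
    (fun i => ULift.up.{u} ((e i ≤ x : Prop), (x ≤ e i : Prop))) (hκ.aleph0_le.trans_eq hI.symm)
    (by rw [hI, hκ.cof_ord]; exact mk_lt_aleph0.trans_le hκ.aleph0_le)
  set H : Set I := (fun i => ULift.up.{u} ((e i ≤ x : Prop), (x ≤ e i : Prop))) ⁻¹' {⟨(p, q)⟩}
  have hHκ : #H = κ := hH.trans hI
  have hcol (i : H) : (e i ≤ x) = p ∧ (x ≤ e i) = q :=
    Prod.mk.inj (congrArg ULift.down i.2)
  obtain ⟨i₀⟩ : Nonempty H := mk_ne_zero_iff.1 (hHκ ▸ hκ.pos.ne')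
  obtain ⟨T, hT⟩ := CompType.exists_rel (hne i₀)
  have hrel (i j : H) (hij : i < j) : T.rel (e i) (e j) := by
    obtain ⟨hle, hge⟩ := Prod.mk.inj (hhom i j hij)
    refine (T.rel_congr ?_ ?_).2 hT
    · rw [hle, (hcol i).1, (hcol i₀).1]
    · rw [hge, (hcol i).2, (hcol i₀).2]
  exact ⟨_, isUniform_range_of_compType_rel hrel,
    (mk_range_eq _ (injective_of_compType_rel hrel)).trans hHκ⟩

/-! ### Antichains in finite powers -/

theorem HasAntichain.orderHom_comp_surjective {P Q M : Type u} {κ : Cardinal.{u}} [Preorder P]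
    [Preorder Q] [Preorder M] (h : HasAntichain (P →o M) κ) (s : Q →o P)
    (hs : Function.Surjective s) : HasAntichain (Q →o M) κ :=
  h.map_of_le_imp_le (·.comp s) fun _ _ hle => hs.forall.2 hle

/-- Some finite power `Lⁿ` has an antichain of cardinality `κ`. Which power it is does not matter,
so that antichains of tuples of constants may have any length. -/
def HasPowerAntichain (L : Type u) [LE L] (κ : Cardinal.{u}) : Prop :=
  ∃ n : ℕ, HasAntichain (Fin n → L) κ

/-- The least cardinal `κ` such that no finite power `Lⁿ` has an antichain of cardinality `κ`. It is
an invariant of the order of `L` that is compared with `#L`. -/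
noncomputable def powerWidth (L : Type u) [LE L] : Cardinal.{u} :=
  sInf {κ | ¬ HasPowerAntichain L κ}

variable {κ μ : Cardinal.{u}}

section PowerWidth

variable [LE L]

theorem HasPowerAntichain.mono (h : HasPowerAntichain L κ) (hμ : μ ≤ κ) :
    HasPowerAntichain L μ :=
  h.imp fun _ hn => hn.mono hμ

variable [Infinite L]

theorem HasPowerAntichain.le_mk (h : HasPowerAntichain L κ) : κ ≤ #L := by
  obtain ⟨n, hn⟩ := h
  calc κ ≤ #(Fin n → L) := hn.le_mk
    _ = #L ^ n := by simp
    _ ≤ #L := power_nat_le (aleph0_le_mk L)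

theorem hasPowerAntichain_iff_lt_powerWidth : HasPowerAntichain L κ ↔ κ < powerWidth L := by
  have hne : {κ | ¬ HasPowerAntichain L κ}.Nonempty :=
    ⟨_, fun h => (Order.lt_succ #L).not_ge h.le_mk⟩
  exact ⟨fun h => lt_of_not_ge fun hle => csInf_mem hne (h.mono hle),
    fun h => not_not.1 fun hnot => (csInf_le' hnot).not_gt h⟩

end PowerWidth

/- Countably many term functions serve all members of the antichain, so `κ` of them arise from a
single one, which is monotone in the constants. -/
theorem OPC.hasPowerAntichain [Lattice L] (h : OPC L)
    (hF : HasAntichain ((Fin n → L) →o L) κ) (hκ : ℵ₀ < κ.ord.cof) : HasPowerAntichain L κ := by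
  induction κ using Cardinal.inductionOn with | mk K =>
  obtain ⟨F, hF⟩ := hasAntichain_mk_iff.1 hF
  have hterm (i : K) : ∃ T : Σ k, {g // IsTermFn L (Fin n ⊕ Fin k) g},
      ∃ c : Fin T.1 → L, ⇑(F i) = fun x => T.2.1 (Sum.elim x c) := by
    obtain ⟨k, g, c, hg, hFg⟩ := (h.isPolynomialFn (F i).monotone).exists_isTermFn
    exact ⟨⟨k, g, hg⟩, c, hFg⟩
  choose term hterm using hterm
  have hcountable (k : ℕ) : Countable {g // IsTermFn L (Fin n ⊕ Fin k) g} :=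
    IsTermFn.countable.to_subtype
  obtain ⟨⟨m, t, ht⟩, hfibre⟩ := infinite_pigeonhole term (hκ.le.trans (Ordinal.cof_ord_le _))
    (mk_le_aleph0.trans_lt hκ)
  have hconst (i : term ⁻¹' {⟨m, t, ht⟩}) :
      ∃ d : Fin m → L, ⇑(F i) = fun x => t (Sum.elim x d) := by
    have hi : term i = ⟨m, t, ht⟩ := i.2
    have hd := hterm i
    rwa [hi] at hd
  choose d hd using hconst
  rw [← hfibre]
  refine ⟨m, hasAntichain_mk_iff.2 ⟨d, fun i j hij => Subtype.ext (hF i j fun x => ?_)⟩⟩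
  rw [hd i, hd j]
  exact ht.monotone (Sum.elim_le_elim_iff.2 ⟨le_rfl, hij⟩)

theorem hasAntichain_orderHom_two_power_of_lt_mk [PartialOrder L] [BoundedOrder L]
    (hμ : ℵ₀ ≤ μ) (hL : 2 ^ μ < #L) : HasAntichain (L →o L) (2 ^ μ) := by
  obtain ⟨A, hA, hAμ⟩ := exists_isUniform_of_two_powerlt_lt (isRegular_succ hμ)
    (by rwa [powerlt_succ two_ne_zero] : 2 ^< Order.succ μ < #L)
  have hinf : A.Infinite := Set.infinite_coe_iff.1 <|
    infinite_iff.2 (hAμ ▸ hμ.trans (Order.le_succ μ))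
  exact (hA.hasAntichain_orderHom hinf).mono
    (power_le_power_left two_ne_zero (hAμ ▸ Order.le_succ μ))

theorem exists_mk_eq_cof_le_sum (hκ : ℵ₀ ≤ κ) : ∃ (ι : Type u) (f : ι → Cardinal.{u}),
    #ι = κ.ord.cof ∧ (∀ i, f i < κ) ∧ κ ≤ sum f := by
  obtain ⟨s, hs, hsκ⟩ := Order.exists_cof_eq κ.ord.ToType
  rw [Ordinal.cof_toType] at hsκ
  refine ⟨s, fun i => #(Set.Iic (i : κ.ord.ToType)), hsκ, fun i => ?_, ?_⟩
  · simpa using mk_Iic_lt (i : κ.ord.ToType) (by simp) (by simpa using hκ)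
  · have hcover : ⋃ i : s, Set.Iic (i : κ.ord.ToType) = Set.univ :=
      Set.iUnion_eq_univ_iff.2 fun x =>
        let ⟨y, hy, hxy⟩ := hs x
        ⟨⟨y, hy⟩, hxy⟩
    calc κ = #(⋃ i : s, Set.Iic (i : κ.ord.ToType)) := by rw [hcover, mk_univ, mk_ord_toType]
      _ ≤ _ := mk_iUnion_le_sum_mk

namespace OPC

variable [Lattice L] [Infinite L]

theorem two_power_lt_powerWidth (h : OPC L) (hκ : ℵ₀ ≤ κ)
    (hF : HasAntichain ((Fin n → L) →o L) (2 ^ κ)) : 2 ^ κ < powerWidth L :=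
  hasPowerAntichain_iff_lt_powerWidth.1 <|
    h.hasPowerAntichain hF (hκ.trans_lt (lt_cof_ord_power hκ one_lt_two))

variable [BoundedOrder L]

theorem two_power_mk_lt_powerWidth (h : OPC L) {A : Set L} (hA : IsUniform A)
    (hinf : A.Infinite) : 2 ^ #A < powerWidth L := by
  have : Infinite A := hinf.to_subtype
  exact h.two_power_lt_powerWidth (n := 1) (aleph0_le_mk A) <|
    (hA.hasAntichain_orderHom hinf).orderHom_comp_surjective ⟨(· 0), fun _ _ hxy => hxy 0⟩
      fun x => ⟨fun _ => x, rfl⟩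

theorem aleph0_lt_powerWidth (h : OPC L) : ℵ₀ < powerWidth L := by
  obtain ⟨A, hA, hinf⟩ := exists_infinite_isUniform L
  have : Infinite A := hinf.to_subtype
  calc ℵ₀ ≤ #A := aleph0_le_mk A
    _ < 2 ^ #A := cantor _
    _ < powerWidth L := h.two_power_mk_lt_powerWidth hA hinf

theorem two_power_lt_powerWidth_of_lt (h : OPC L) (hκ : κ < powerWidth L) :
    2 ^ κ < powerWidth L := by
  obtain hfin | hinf := lt_or_ge κ ℵ₀
  · exact (power_lt_aleph0 (natCast_lt_aleph0 (n := 2)) hfin).trans h.aleph0_lt_powerWidth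
  · obtain ⟨n, hn⟩ := hasPowerAntichain_iff_lt_powerWidth.2 hκ
    exact h.two_power_lt_powerWidth hinf (hn.orderHom_two_power hinf)

theorem powerWidth_le_mk (h : OPC L) : powerWidth L ≤ #L :=
  le_of_not_gt fun hlt => (cantor #L).not_ge <|
    (hasPowerAntichain_iff_lt_powerWidth.2 (h.two_power_lt_powerWidth_of_lt hlt)).le_mk

theorem hasAntichain_orderHom_of_lt_powerWidth (h : OPC L) (hκ : κ < powerWidth L) :
    HasAntichain (L →o L) (2 ^ κ) := by
  have hmax : max ℵ₀ κ < powerWidth L := max_lt h.aleph0_lt_powerWidth hκ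
  exact (hasAntichain_orderHom_two_power_of_lt_mk (le_max_left _ _)
    ((h.two_power_lt_powerWidth_of_lt hmax).trans_le h.powerWidth_le_mk)).mono
    (power_le_power_left two_ne_zero (le_max_right _ _))

theorem isRegular_powerWidth (h : OPC L) : (powerWidth L).IsRegular := by
  have hinf : ℵ₀ ≤ powerWidth L := h.aleph0_lt_powerWidth.le
  refine ⟨hinf, le_of_not_gt fun hcof => ?_⟩
  obtain ⟨ι, f, hι, hf, hsum⟩ := exists_mk_eq_cof_le_sum hinf
  obtain ⟨n, hn⟩ := hasPowerAntichain_iff_lt_powerWidth.2 (hι.trans_lt hcof)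
  have hglue : HasAntichain ((Fin n → L) × L →o L) (2 ^ sum f) := by
    rw [power_sum]
    exact hn.orderHom_prod fun i => h.hasAntichain_orderHom_of_lt_powerWidth (hf i)
  let split : (Fin (n + 1) → L) →o (Fin n → L) × L :=
    ⟨fun x => (Fin.tail x, x 0), fun x y hxy => ⟨fun i => hxy i.succ, hxy 0⟩⟩
  have hsplit : Function.Surjective split := fun x => ⟨Fin.cons x.2 x.1, rfl⟩
  have hlt : 2 ^ sum f < powerWidth L := h.two_power_lt_powerWidth (hinf.trans hsum)
    (hglue.orderHom_comp_surjective split hsplit)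
  exact ((cantor _).trans hlt).not_ge hsum

theorem powerWidth_eq_mk (h : OPC L) : powerWidth L = #L := by
  refine h.powerWidth_le_mk.antisymm (le_of_not_gt fun hlt => ?_)
  have hpowerlt : 2 ^< powerWidth L ≤ powerWidth L :=
    powerlt_le.2 fun κ hκ => (h.two_power_lt_powerWidth_of_lt hκ).le
  obtain ⟨A, hA, hAκ⟩ :=
    exists_isUniform_of_two_powerlt_lt h.isRegular_powerWidth (hpowerlt.trans_lt hlt)
  have hinf : A.Infinite := Set.infinite_coe_iff.1 <|
    infinite_iff.2 (hAκ ▸ h.aleph0_lt_powerWidth.le)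
  exact ((cantor _).trans (h.two_power_mk_lt_powerWidth hA hinf)).ne hAκ

end OPC

/-- If `L` is an infinite order polynomially complete lattice, then `|L|` is a strongly
inaccessible cardinal. -/
theorem opc_card_isInaccessible (L : Type u) [Lattice L] [Infinite L] (h : OPC L) :
    Cardinal.IsInaccessible #L := by
  obtain ⟨t, ht⟩ := h.exists_isTop
  obtain ⟨b, hb⟩ := h.exists_isBot
  let _ : BoundedOrder L := { top := t, le_top := ht, bot := b, bot_le := hb }
  rw [← h.powerWidth_eq_mk]
  exact ⟨h.aleph0_lt_powerWidth, h.isRegular_powerWidth.2,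
    fun _ => h.two_power_lt_powerWidth_of_lt⟩
end

section
/- If L is an order polynomially complete lattice, then L is bounded, i.e., L has a greatest element and a smallest element. -/
universe u v w

open Cardinal

/-!
Every polynomial function `p` satisfies `p (y, …, y) ≤ y` for all sufficiently large `y`: this holds
for projections and constants, and it is preserved by `⊔` and `⊓`. On the other hand, if there is no
maximal element, then a maximal chain `C` is unbounded above; let `f y` be the first element of `C`,
in a fixed well-ordering of the underlying set unrelated to `≤`, that is not below `y`. Then
`f y ≤ y` never holds, yet `f` is monotone: for `y ≤ z`, either `f y` is not below `z` and
`f z = f y`, or `f y ≤ z` and `f z ≤ f y` is impossible. The smallest element is obtained dually.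
-/

theorem IsPolynomialFn.eventually_apply_const_le {L : Type u} [Lattice L] {n : ℕ}
    {p : (Fin n → L) → L} (hp : IsPolynomialFn L n p) :
    ∀ᶠ y in Filter.atTop, p (fun _ => y) ≤ y := by
  induction hp using latticeClosure_sup_inf_induction with
  | mem p hp =>
    obtain ⟨i, rfl⟩ | ⟨c, rfl⟩ := hp
    · exact .of_forall fun _ => le_rfl
    · exact Filter.eventually_ge_atTop c
  | sup p _ q _ hp hq => exact hp.mp (hq.mono fun _ hqy hpy => sup_le hpy hqy)
  | inf p _ q _ hp _ => exact hp.mono fun _ hpy => inf_le_left.trans hpy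

theorem IsPolynomialFn.eventually_le_apply_const {L : Type u} [Lattice L] {n : ℕ}
    {p : (Fin n → L) → L} (hp : IsPolynomialFn L n p) :
    ∀ᶠ y in Filter.atBot, y ≤ p (fun _ => y) := by
  induction hp using latticeClosure_sup_inf_induction with
  | mem p hp =>
    obtain ⟨i, rfl⟩ | ⟨c, rfl⟩ := hp
    · exact .of_forall fun _ => le_rfl
    · exact Filter.eventually_le_atBot c
  | sup p _ q _ hp _ => exact hp.mono fun _ hpy => hpy.trans le_sup_left
  | inf p _ q _ hp hq => exact hp.mp (hq.mono fun _ hqy hpy => le_inf hpy hqy)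

section Preorder

variable {α : Type*} [Preorder α]

theorem isMax_of_mem_upperBounds_of_isMaxChain {C : Set α} (hC : IsMaxChain (· ≤ ·) C) {a : α}
    (ha : a ∈ upperBounds C) : IsMax a := by
  intro b hab
  have hchain : IsChain (· ≤ ·) (insert b C) :=
    hC.isChain.insert fun c hc _ => Or.inr ((ha hc).trans hab)
  have hbC : b ∈ C := hC.2 hchain (Set.subset_insert b C) ▸ Set.mem_insert b C
  exact ha hbC

theorem exists_monotone_forall_not_apply_le_of_isChain {C : Set α} (hC : IsChain (· ≤ ·) C)
    (hunbdd : ¬ BddAbove C) : ∃ f : α → α, Monotone f ∧ ∀ y, ¬ f y ≤ y := by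
  let S (y : α) : Set α := {x ∈ C | ¬ x ≤ y}
  have hS (y : α) : (S y).Nonempty := not_bddAbove_iff'.1 hunbdd y
  have hS_anti : Antitone S := fun _ _ hyz _ hx => ⟨hx.1, fun hxy => hx.2 (hxy.trans hyz)⟩
  have wf : WellFounded (WellOrderingRel : α → α → Prop) := IsWellFounded.wf
  let f (y : α) : α := wf.min (S y) (hS y)
  have hf (y : α) : f y ∈ S y := wf.min_mem (S y) (hS y)
  refine ⟨f, fun y z hyz => ?_, fun y => (hf y).2⟩
  by_cases hfz : f y ≤ z
  · refine (hC.total (hf y).1 (hf z).1).resolve_right fun hzy => ?_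
    exact (hf z).2 (hzy.trans hfz)
  · have hfirst : f z = f y := wf.min_eq_of_forall_not_lt (s := S z) ⟨(hf y).1, hfz⟩
      fun x hx => wf.not_lt_min (S y) (hS_anti hyz hx)
    exact hfirst.ge

theorem exists_isMax_of_forall_monotone_exists_apply_le
    (h : ∀ f : α → α, Monotone f → ∃ y, f y ≤ y) : ∃ a : α, IsMax a := by
  obtain ⟨C, hC⟩ : ∃ C : Set α, IsMaxChain (· ≤ ·) C := ⟨_, maxChain_spec⟩
  by_cases hbdd : BddAbove C
  · exact hbdd.imp fun _ ha => isMax_of_mem_upperBounds_of_isMaxChain hC ha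
  · obtain ⟨f, hf, hfy⟩ := exists_monotone_forall_not_apply_le_of_isChain hC.isChain hbdd
    obtain ⟨y, hy⟩ := h f hf
    exact absurd hy (hfy y)

theorem exists_isMin_of_forall_monotone_exists_le_apply
    (h : ∀ f : α → α, Monotone f → ∃ y, y ≤ f y) : ∃ a : α, IsMin a :=
  exists_isMax_of_forall_monotone_exists_apply_le (α := αᵒᵈ) fun f hf => h f hf.dual

end Preorder

theorem opc_bounded_general (L : Type u) [Lattice L] [Nonempty L] {n : ℕ} (hn : 1 ≤ n)
    (h : ∀ f : (Fin n → L) → L, Monotone f → IsPolynomialFn L n f) :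
    (∃ t : L, ∀ x : L, x ≤ t) ∧ (∃ b : L, ∀ x : L, b ≤ x) := by
  have hpoly (f : L → L) (hf : Monotone f) : IsPolynomialFn L n fun x => f (x ⟨0, hn⟩) :=
    h _ fun _ _ hxy => hf (hxy ⟨0, hn⟩)
  constructor
  · obtain ⟨t, ht⟩ := exists_isMax_of_forall_monotone_exists_apply_le fun f hf =>
      (hpoly f hf).eventually_apply_const_le.exists
    exact ⟨t, ht.isTop⟩
  · obtain ⟨b, hb⟩ := exists_isMin_of_forall_monotone_exists_le_apply fun f hf =>
      (hpoly f hf).eventually_le_apply_const.exists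
    exact ⟨b, hb.isBot⟩

/-- Every order polynomially complete lattice is bounded: it has a greatest and a
smallest element. -/
theorem opc_bounded (L : Type u) [Lattice L] [Nonempty L] (h : OPC L) :
    (∃ t : L, ∀ x : L, x ≤ t) ∧ (∃ b : L, ∀ x : L, b ≤ x) :=
  opc_bounded_general L le_rfl (h 1 le_rfl)
end

section
/- Let L be a partial order and κ an infinite cardinal. If |L| > 2^κ, then μ(L) > κ⁺ (in particular μ(L) > κ): L contains a uniform subset of cardinality κ⁺. -/
universe u v w

open Cardinal

/-! Call `c (x i) (x j)`, for `i < j`, the colour of a pair. Starting from more than `2^κ` points,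
the Erdős–Rado argument closes off to a set `M` of at most `2^κ` points such that whatever a point
`a` outside `M` does to a subset of `M` of size at most `κ` is already done by a point of `M`.
Imitating a fixed such `a` inside `M` step by step, for `κ⁺` steps, gives a sequence in which the
colour of a pair depends only on its smaller index, and the pigeonhole principle makes it constant.
For the colouring of pairs of `L` by `<`, `>` and incomparability, a homogeneous `κ⁺`-sequence is
strictly increasing, strictly decreasing or an antichain. -/

theorem exists_dependent_choice_of_wellFoundedLT {I : Type v} {X : Type w} [Preorder I]
    [WellFoundedLT I] {P : ∀ i : I, (Set.Iio i → X) → X → Prop} (h : ∀ i v, ∃ y, P i v y) :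
    ∃ x : I → X, ∀ i, P i (fun j => x j) (x i) := by
  choose pick hpick using h
  let x : I → X := WellFoundedLT.fix fun i v => pick i fun j => v j j.2
  refine ⟨x, fun i => ?_⟩
  have hx : x i = pick i fun j => x j := WellFoundedLT.fix_eq _ i
  rw [hx]
  exact hpick i _

section ErdosRado

variable {X C I : Type u} {κ θ : Cardinal.{u}}

theorem exists_subset_range_of_mk_le {T : Type u} [Nonempty X] {B : Set X} (h : #B ≤ #T) :
    ∃ e : T → X, B ⊆ Set.range e := by
  obtain ⟨f⟩ : Nonempty (B ↪ T) := h
  exact ⟨Function.extend f (↑) fun _ => Classical.arbitrary X,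
    fun y hy => ⟨f ⟨y, hy⟩, f.injective.extend_apply _ _ _⟩⟩

theorem mk_wType_le {α : Type u} {β : α → Type u} (hθ : ℵ₀ ≤ θ) (hθκ : θ ^ κ ≤ θ)
    (hα : #α ≤ θ) (hβ : ∀ a, #(β a) ≤ κ) : #(WType β) ≤ θ := by
  have hθ₀ : θ ≠ 0 := (Cardinal.aleph0_pos.trans_le hθ).ne'
  refine WType.cardinalMk_le_of_le ?_
  calc Cardinal.sum (fun a => θ ^ #(β a))
      ≤ Cardinal.sum (fun _ : α => θ) :=
        Cardinal.sum_le_sum _ _ fun a => (Cardinal.power_le_power_left hθ₀ (hβ a)).trans hθκ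
    _ = #α * θ := Cardinal.sum_const' α θ
    _ ≤ θ * θ := by gcongr
    _ = θ := Cardinal.mul_eq_self hθ

theorem exists_closed_of_mk_le (hθ : ℵ₀ ≤ θ) (hθκ : θ ^ κ ≤ θ) {F : Set X → Set X}
    (hF : ∀ A : Set X, #A ≤ κ → #(F A) ≤ θ) :
    ∃ M : Set X, #M ≤ θ ∧ ∀ A ⊆ M, #A ≤ κ → F A ⊆ M := by
  rcases isEmpty_or_nonempty X with hX | hX
  · exact ⟨∅, by simp, fun A _ _ => (F A).eq_empty_of_isEmpty.subset⟩
  have enum : ∀ A : Set X, ∃ e : θ.out → X, #A ≤ κ → F A ⊆ Set.range e := fun A => by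
    by_cases hA : #A ≤ κ
    · obtain ⟨e, he⟩ := exists_subset_range_of_mk_le ((hF A hA).trans_eq θ.mk_out.symm)
      exact ⟨e, fun _ => he⟩
    · exact ⟨fun _ => Classical.arbitrary X, fun h => absurd h hA⟩
  choose e he using enum
  -- A node labelled `(s, t)` with children `v : s → X` denotes the `t`-th element of `F (range v)`.
  let β : Set κ.out × θ.out → Type u := fun p => p.1
  let eval : WType β → X := WType.elim X fun q => e (Set.range q.2) q.1.2
  have hα : #(Set κ.out × θ.out) ≤ θ := by
    have h2 : (2 : Cardinal) ≤ θ := (Cardinal.natCast_lt_aleph0 (n := 2)).le.trans hθ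
    calc #(Set κ.out × θ.out) = 2 ^ κ * θ := by simp
      _ ≤ θ * θ := by gcongr; exact (Cardinal.power_le_power_right h2).trans hθκ
      _ = θ := Cardinal.mul_eq_self hθ
  have hβ : ∀ p, #(β p) ≤ κ := fun p => (Cardinal.mk_set_le p.1).trans_eq κ.mk_out
  refine ⟨Set.range eval, Cardinal.mk_range_le.trans (mk_wType_le hθ hθκ hα hβ), ?_⟩
  intro A hAM hA y hy
  obtain ⟨t, rfl⟩ := he A hA hy
  obtain ⟨s, hs⟩ := Cardinal.le_mk_iff_exists_set.1 (hA.trans_eq κ.mk_out.symm)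
  obtain ⟨σ⟩ := Cardinal.eq.1 hs
  choose tree htree using fun z : A => hAM z.2
  refine ⟨WType.mk (s, t) fun k => tree (σ k), ?_⟩
  have hA_range : Set.range (fun k => eval (tree (σ k))) = A := by
    simp only [htree]
    exact (σ.surjective.range_comp _).trans Subtype.range_coe
  exact congrArg (e · t) hA_range

theorem exists_representatives (c : X → X → C) (A : Set X) :
    ∃ R ⊆ Aᶜ, #R ≤ #C ^ #A ∧ ∀ a ∉ A, ∃ y ∈ R, ∀ z ∈ A, c z y = c z a := by
  let colours : X → A → C := fun y z => c z y
  obtain ⟨R, hRA, hR⟩ := Set.exists_subset_bijOn Aᶜ colours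
  refine ⟨R, hRA, ?_, fun a ha => ?_⟩
  · rw [Cardinal.power_def]
    exact Cardinal.mk_le_of_injective hR.injOn.injective
  · obtain ⟨y, hy, hya⟩ := hR.surjOn ⟨a, ha, rfl⟩
    exact ⟨y, hy, fun z hz => congrFun hya ⟨z, hz⟩⟩

theorem exists_reflecting_set (hθ : ℵ₀ ≤ θ) (hθκ : θ ^ κ ≤ θ) (hC : #C ≤ θ) (c : X → X → C) :
    ∃ M : Set X, #M ≤ θ ∧
      ∀ A ⊆ M, #A ≤ κ → ∀ a ∉ A, ∃ y ∈ M \ A, ∀ z ∈ A, c z y = c z a := by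
  choose R hRA hRcard hR using exists_representatives c
  have hθ₀ : θ ≠ 0 := (Cardinal.aleph0_pos.trans_le hθ).ne'
  have hRθ : ∀ A : Set X, #A ≤ κ → #(R A) ≤ θ := fun A hA =>
    calc #(R A) ≤ #C ^ #A := hRcard A
      _ ≤ θ ^ #A := Cardinal.power_le_power_right hC
      _ ≤ θ ^ κ := Cardinal.power_le_power_left hθ₀ hA
      _ ≤ θ := hθκ
  obtain ⟨M, hMcard, hM⟩ := exists_closed_of_mk_le hθ hθκ hRθ
  refine ⟨M, hMcard, fun A hAM hA a ha => ?_⟩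
  obtain ⟨y, hy, hya⟩ := hR A a ha
  exact ⟨y, ⟨hM A hAM hA hy, hRA A hy⟩, hya⟩

theorem exists_endHomogeneous_seq [Preorder I] [WellFoundedLT I] (hI : ∀ i : I, #(Set.Iio i) ≤ κ)
    (hθ : ℵ₀ ≤ θ) (hθκ : θ ^ κ ≤ θ) (hC : #C ≤ θ) (hX : θ < #X) (c : X → X → C) :
    ∃ (x : I → X) (d : I → C), ∀ i j, i < j → x i ≠ x j ∧ c (x i) (x j) = d i := by
  obtain ⟨M, hMcard, hM⟩ := exists_reflecting_set hθ hθκ hC c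
  obtain ⟨a, ha⟩ : ∃ a, a ∉ M := by
    by_contra! hall
    rw [Set.eq_univ_of_forall hall, Cardinal.mk_univ] at hMcard
    exact hMcard.not_gt hX
  have imitate : ∀ (i : I) (v : Set.Iio i → M),
      ∃ y : M, ∀ j, v j ≠ y ∧ c (v j) y = c (v j) a := fun i v => by
    let A : Set X := Set.range fun j => (v j : X)
    have hAM : A ⊆ M := Set.range_subset_iff.2 fun j => (v j).2
    obtain ⟨y, ⟨hyM, hyA⟩, hy⟩ :=
      hM A hAM (Cardinal.mk_range_le.trans (hI i)) a fun haA => ha (hAM haA)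
    exact ⟨⟨y, hyM⟩, fun j => ⟨fun hj => hyA ⟨j, congrArg Subtype.val hj⟩, hy _ ⟨j, rfl⟩⟩⟩
  obtain ⟨x, hx⟩ := exists_dependent_choice_of_wellFoundedLT imitate
  exact ⟨fun i => x i, fun i => c (x i) a, fun i j hij =>
    ⟨Subtype.coe_ne_coe.2 (hx j ⟨i, hij⟩).1, (hx j ⟨i, hij⟩).2⟩⟩

theorem nonempty_ord_toType_orderEmbedding [LinearOrder I] [WellFoundedLT I] :
    Nonempty ((#I).ord.ToType ↪o I) := by
  have htype : Ordinal.type ((· < ·) : (#I).ord.ToType → _ → Prop) ≤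
      Ordinal.type ((· < ·) : I → I → Prop) := by
    rw [Ordinal.type_toType]
    exact Cardinal.ord_le_type _
  obtain ⟨f⟩ := Ordinal.type_le_iff'.1 htype
  exact ⟨f.orderEmbeddingOfLTEmbedding⟩

theorem mk_Iio_ord_succ_toType_le (i : (Order.succ κ).ord.ToType) : #(Set.Iio i) ≤ κ := by
  have hlt : #(Set.Iio i) < #(Order.succ κ).ord.ToType := Cardinal.mk_Iio_lt i (by simp)
  rwa [Cardinal.mk_ord_toType, Order.lt_succ_iff] at hlt

theorem erdos_rado_pairs (hκ : ℵ₀ ≤ κ) (hC : #C ≤ κ) (hX : 2 ^ κ < #X) (c : X → X → C) :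
    ∃ (x : (Order.succ κ).ord.ToType ↪ X) (t : C), ∀ i j, i < j → c (x i) (x j) = t := by
  have hpow : ((2 : Cardinal.{u}) ^ κ) ^ κ ≤ 2 ^ κ := by
    rw [← Cardinal.power_mul, Cardinal.mul_eq_self hκ]
  have hκ2 : κ ≤ 2 ^ κ := (Cardinal.cantor κ).le
  obtain ⟨x, d, hx⟩ := exists_endHomogeneous_seq mk_Iio_ord_succ_toType_le
    (hκ.trans hκ2) hpow (hC.trans hκ2) hX c
  have hxinj : Function.Injective x :=
    .of_lt_imp_ne fun i j hij => (hx i j hij).1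
  have hreg := Cardinal.isRegular_succ hκ
  obtain ⟨t, ht⟩ := Cardinal.infinite_pigeonhole d
    (by rw [Cardinal.mk_ord_toType]; exact hreg.aleph0_le)
    (by rw [Cardinal.mk_ord_toType, hreg.cof_ord]; exact Order.lt_succ_iff.2 hC)
  rw [Cardinal.mk_ord_toType] at ht
  obtain ⟨φ⟩ := nonempty_ord_toType_orderEmbedding (I := d ⁻¹' {t})
  rw [ht] at φ
  exact ⟨⟨fun i => x (φ i), hxinj.comp (Subtype.val_injective.comp φ.injective)⟩, t,
    fun i j hij => (hx _ _ (φ.lt_iff_lt.2 hij)).2.trans (φ i).2⟩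

end ErdosRado

section Uniform

variable {L : Type u} [PartialOrder L] {I : Type v} [LinearOrder I] {x : I → L}

theorem isWellChain_range_of_strictMono [WellFoundedLT I] (hx : StrictMono x) :
    IsWellChain (Set.range x) := by
  refine ⟨hx.monotone.isChain_range, Set.wellFoundedOn_range.2 ?_⟩
  exact Subrelation.wf (fun h => hx.lt_iff_lt.1 h) wellFounded_lt

theorem isCoWellChain_range_of_strictAnti [WellFoundedLT I] (hx : StrictAnti x) :
    IsCoWellChain (Set.range x) := by
  refine ⟨hx.antitone.isChain_range, Set.wellFoundedOn_range.2 ?_⟩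
  exact Subrelation.wf (fun h => hx.lt_iff_gt.1 h) wellFounded_lt

theorem isAntichain_range_of_incomp (hx : ∀ i j, i < j → CompType.incomp.rel (x i) (x j)) :
    IsAntichain (· ≤ ·) (Set.range x) := by
  rintro _ ⟨i, rfl⟩ _ ⟨j, rfl⟩ hne
  rcases lt_trichotomy i j with hij | rfl | hji
  · exact (hx i j hij).1
  · exact absurd rfl hne
  · exact (hx j i hji).2

theorem isUniform_range_of_rel [WellFoundedLT I] {t : CompType}
    (hx : ∀ i j, i < j → t.rel (x i) (x j)) : IsUniform (Set.range x) := by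
  cases t with
  | lt => exact .inr (.inl (isWellChain_range_of_strictMono fun i j => hx i j))
  | gt => exact .inr (.inr (isCoWellChain_range_of_strictAnti fun i j => hx i j))
  | incomp => exact .inl (isAntichain_range_of_incomp hx)

theorem exists_compType_rel (a b : L) : ∃ t : CompType, a ≠ b → t.rel a b := by
  by_cases hab : a ≤ b
  · exact ⟨.lt, hab.lt_of_ne⟩
  by_cases hba : b ≤ a
  · exact ⟨.gt, fun hne => hba.lt_of_ne hne.symm⟩
  · exact ⟨.incomp, fun _ => ⟨hab, hba⟩⟩

instance : Finite CompType :=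
  .of_surjective (![.lt, .gt, .incomp] : Fin 3 → CompType)
    (by rintro (_ | _ | _); exacts [⟨0, rfl⟩, ⟨1, rfl⟩, ⟨2, rfl⟩])

theorem exists_isUniform_mk_eq_succ {κ : Cardinal.{u}} (hκ : ℵ₀ ≤ κ) (hL : 2 ^ κ < #L) :
    ∃ A : Set L, IsUniform A ∧ #A = Order.succ κ := by
  choose comp hcomp using exists_compType_rel (L := L)
  have hC : #(ULift.{u} CompType) ≤ κ := (Cardinal.lt_aleph0_of_finite _).le.trans hκ
  obtain ⟨x, t, hx⟩ := erdos_rado_pairs hκ hC hL fun a b => ULift.up (comp a b)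
  refine ⟨Set.range x, isUniform_range_of_rel (t := t.down) fun i j hij => ?_, ?_⟩
  · rw [← hx i j hij]
    exact hcomp _ _ (x.injective.ne hij.ne)
  · rw [Cardinal.mk_range_eq x x.injective, Cardinal.mk_ord_toType]

theorem IsUniform.subset {A B : Set L} (hA : IsUniform A) (hBA : B ⊆ A) : IsUniform B :=
  hA.imp (·.subset hBA) <|
    Or.imp (fun h => ⟨h.1.mono hBA, h.2.subset hBA⟩) fun h => ⟨h.1.mono hBA, h.2.subset hBA⟩

theorem lt_mu_iff {m : Cardinal.{u}} : m < mu L ↔ ∃ A : Set L, IsUniform A ∧ #A = m := by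
  refine ⟨fun hm => not_not.1 (notMem_of_lt_csInf' hm), ?_⟩
  rintro ⟨A, hA, rfl⟩
  by_contra! hle
  obtain ⟨B, hBA, hB⟩ := Cardinal.le_mk_iff_exists_subset.1 hle
  have hne : {m : Cardinal.{u} | ¬ ∃ A : Set L, IsUniform A ∧ #A = m}.Nonempty := by
    refine ⟨Order.succ #L, ?_⟩
    rintro ⟨D, -, hD⟩
    exact (Cardinal.mk_set_le D).not_gt (hD ▸ Order.lt_succ #L)
  exact csInf_mem hne ⟨B, hA.subset hBA, hB⟩

end Uniform

/-- If `|L| > 2^κ` for an infinite cardinal `κ`, then `μ(L) > κ⁺`: indeed `L` contains a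
uniform subset of cardinality `κ⁺`. -/
theorem mu_gt_succ_of_card_gt_two_pow (L : Type u) [PartialOrder L] (κ : Cardinal.{u})
    (hκ : ℵ₀ ≤ κ) (h : 2 ^ κ < #L) :
    Order.succ κ < mu L ∧ ∃ A : Set L, IsUniform A ∧ #A = Order.succ κ := by
  have hA := exists_isUniform_mk_eq_succ hκ h
  exact ⟨lt_mu_iff.2 hA, hA⟩
end

section
/- Let κ be a singular strong limit cardinal with cofinality λ = cf(κ) < κ, and let L be a partial order with |L| = κ. Then there is a family (A_ζ)_{ζ<λ} of pairwise disjoint subsets of L such that: (1) (A_ζ)_{ζ<λ} is canonical; (2) the sequence of cardinalities (|A_ζ|)_{ζ<λ} is strictly increasing; (3) sup_{ζ<λ} |A_ζ| = κ; (4) |A_ζ| > λ for every ζ < λ. -/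
universe u v w

open Cardinal

/-! The engine is the Erdős–Rado theorem, proved with the tree of end-homogeneous sequences: a
colouring of pairs from a set of size `> 2 ^ ν` in at most `ν` colours has a homogeneous set of
size `ν⁺`. Choose `m` increasing, indexed by `λ` and cofinal in `κ`, with `(2 ^ m i)⁺ ≤ m j` for
`i < j`, and apply the theorem inside `λ` disjoint sets of size `κ` to get homogeneous sets `A i` of
size `(2 ^ m i)⁺`. The union of the `A j` with `j < i` has size at most `m i`, so an element of
`A i` has at most `2 ^ m i` colour patterns over it; as `#(A i)` is regular, `A i` can be thinned,
keeping its size, until this pattern is constant. A second thinning makes the colours of `a ∈ A i`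
with one representative of each other set independent of `a`, and a last pigeonhole on `λ` makes
the colours inside the `A i` coincide. For a partial order the colour of a pair is its comparison
type. -/

namespace Canonization

open Set Order Function

section Pigeonhole

theorem isRegularCardinalOrder_ord_toType {c : Cardinal.{u}} (hc : c.IsRegular) :
    IsRegularCardinalOrder c.ord.ToType where
  type_lt_le_ord_cof := by
    rw [Ordinal.type_toType, Ordinal.cof_toType, hc.cof_ord]

theorem exists_strictMono_comp_eq_const {I C : Type u} [LinearOrder I] [WellFoundedLT I]
    [IsRegularCardinalOrder I] (f : I → C) (hC : #C < #I) :
    ∃ ε : I → I, StrictMono ε ∧ ∃ t, ∀ i, f (ε i) = t := by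
  obtain ⟨t, ht⟩ : ∃ t, IsCofinal (f ⁻¹' {t}) := by
    refine isCofinal_of_isCofinal_iUnion ?_ (by rwa [cof_eq_cardinalMk])
    rw [← preimage_iUnion, iUnion_of_singleton, preimage_univ]
    exact .univ
  exact ⟨fun i => enum _ ht i, fun i j hij => (enum _ ht).strictMono hij, t,
    fun i => (enum _ ht i).2⟩

theorem exists_subset_mk_eq_forall_eq {X T : Type u} (A : Set X) (f : X → T)
    (hA : (#A).IsRegular) (hT : #T < #A) :
    ∃ A' ⊆ A, #A' = #A ∧ ∀ a ∈ A', ∀ b ∈ A', f a = f b := by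
  obtain ⟨t, A', hA', hcard, ht⟩ := infinite_pigeonhole_set (fun a : A => f a) (#A) le_rfl
    hA.aleph0_le (by rwa [hA.cof_ord])
  exact ⟨A', hA', (mk_le_mk_of_subset hA').antisymm hcard,
    fun a ha b hb => (ht ha).trans (ht hb).symm⟩

end Pigeonhole

section Cardinals

theorem mk_arrow_le_two_power {U C : Type u} {m : Cardinal.{u}} (hm : ℵ₀ ≤ m) (hU : #U ≤ m)
    (hC : #C ≤ m) : #(U → C) ≤ 2 ^ m := by
  rw [← power_def]
  calc #C ^ #U ≤ m ^ #U := power_le_power_right hC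
    _ ≤ m ^ m := power_le_power_left (aleph0_pos.trans_le hm).ne' hU
    _ = 2 ^ m := power_self_eq hm

theorem exists_pairwise_disjoint_mk_eq {I X : Type u} {κ : Cardinal.{u}} (h : #I * κ ≤ #X) :
    ∃ B : I → Set X, Pairwise (Disjoint on B) ∧ ∀ i, #(B i) = κ := by
  rw [← κ.mk_out, mul_def, Cardinal.le_def] at h
  obtain ⟨e⟩ := h
  refine ⟨fun i => range fun x => e (i, x), fun i j hij => ?_, fun i => ?_⟩
  · rw [Function.onFun, disjoint_range_iff]
    exact fun x y hxy => hij (Prod.ext_iff.1 (e.injective hxy)).1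
  · exact (mk_range_eq _ fun x y hxy => (Prod.ext_iff.1 (e.injective hxy)).2).trans κ.mk_out

theorem exists_forall_lt_forall_exists_le {I : Type u} {κ : Cardinal.{u}}
    (hI : #I = κ.ord.cof) :
    ∃ h : I → Cardinal.{u}, (∀ i, h i < κ) ∧ ∀ c < κ, ∃ i, c ≤ h i := by
  obtain ⟨s, hs, hcard⟩ := exists_cof_eq κ.ord.ToType
  rw [Ordinal.cof_toType, ← hI] at hcard
  obtain ⟨e⟩ := Cardinal.eq.1 hcard
  refine ⟨fun i => (Ordinal.ToType.mk.symm (e.symm i).1).1.card,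
    fun i => lt_ord.1 (Ordinal.ToType.mk.symm (e.symm i).1).2, fun c hc => ?_⟩
  obtain ⟨x, hx, hcx⟩ := hs (Ordinal.ToType.mk ⟨c.ord, ord_lt_ord.2 hc⟩)
  refine ⟨e ⟨x, hx⟩, ?_⟩
  simp only [Equiv.symm_apply_apply]
  rw [← ord_le]
  exact Ordinal.ToType.mk.le_symm_apply.2 hcx

theorem exists_rapidly_increasing {I : Type u} [LinearOrder I] [WellFoundedLT I]
    [IsRegularCardinalOrder I] {κ b : Cardinal.{u}} (hI : #I = κ.ord.cof) (hb : b < κ)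
    {f : Cardinal.{u} → Cardinal.{u}} (hf : ∀ c < κ, f c < κ) :
    ∃ m : I → Cardinal.{u}, (∀ i, b ≤ m i) ∧ (∀ i, m i < κ) ∧
      (∀ i j, i < j → f (m i) ≤ m j) ∧ ∀ c < κ, ∃ i, c ≤ m i := by
  obtain ⟨h, hlt, hcof⟩ := exists_forall_lt_forall_exists_le hI
  obtain ⟨m, hm⟩ : ∃ m : I → Cardinal.{u},
      ∀ i, m i = max (max b (h i)) (⨆ j : Iio i, f (m j)) :=
    ⟨wellFounded_lt.fix fun i m => max (max b (h i)) (⨆ j : Iio i, f (m j j.2)),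
      fun i => wellFounded_lt.fix_eq _ i⟩
  have hle : ∀ i, max b (h i) ≤ m i := fun i => (le_max_left _ _).trans (hm i).ge
  refine ⟨m, fun i => (le_max_left _ _).trans (hle i), fun i => ?_, fun i j hij => ?_,
    fun c hc => ?_⟩
  · induction i using WellFoundedLT.induction with
    | ind i ih =>
      have hIio : #(Iio i) < κ.ord.cof := (mk_Iio_lt i ord_cardinalMk).trans_eq hI
      rw [hm]
      exact max_lt (max_lt hb (hlt i))
        (iSup_lt_of_lt_cof_ord hIio fun j => hf _ (ih j j.2))
  · rw [hm j]
    exact le_max_of_le_right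
      (le_ciSup (f := fun k : Iio j => f (m k)) bddAbove_of_small ⟨i, hij⟩)
  · obtain ⟨i, hi⟩ := hcof c hc
    exact ⟨i, hi.trans ((le_max_right _ _).trans (hle i))⟩

end Cardinals

section ErdosRado

variable {X : Type u} {C : Type v} {I : Type w} [LinearOrder I] [WellFoundedLT I]

/-- The branch of the Erdős–Rado tree of the colouring `c` that leads to `x`: its `i`-th node is an
element, different from all earlier nodes, that the earlier nodes do not distinguish from `x`. The
node is chosen by means of the earlier nodes and their colours with `x` only, so that elements with
the same colours share a branch. It is a junk value once `x` itself has occurred as a node. -/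
noncomputable def branch [Nonempty X] (c : X → X → C) (x : X) : I → X :=
  wellFounded_lt.fix fun i y =>
    Classical.epsilon fun z => ∀ j (hj : j < i), y j hj ≠ z ∧ c (y j hj) z = c (y j hj) x

theorem branch_eq [Nonempty X] (c : X → X → C) (x : X) (i : I) :
    branch c x i = Classical.epsilon fun z =>
      ∀ j < i, branch c x j ≠ z ∧ c (branch c x j) z = c (branch c x j) x :=
  wellFounded_lt.fix_eq _ i

theorem branch_spec [Nonempty X] (c : X → X → C) {x : X} {i : I}
    (hx : ∀ j < i, branch c x j ≠ x) :
    ∀ j < i, branch c x j ≠ branch c x i ∧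
      c (branch c x j) (branch c x i) = c (branch c x j) x := by
  rw [branch_eq c x i]
  exact Classical.epsilon_spec
    (p := fun z => ∀ j < i, branch c x j ≠ z ∧ c (branch c x j) z = c (branch c x j) x)
    ⟨x, fun j hj => ⟨hx j hj, rfl⟩⟩

theorem branch_congr [Nonempty X] (c : X → X → C) {x x' : X} {i : I}
    (h : ∀ j < i, c (branch c x j) x = c (branch c x' j) x') : branch c x i = branch c x' i := by
  induction i using WellFoundedLT.induction with
  | ind i ih =>
    have hj : ∀ j < i, branch c x j = branch c x' j := fun j hji =>
      ih j hji fun k hkj => h k (hkj.trans hji)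
    rw [branch_eq c x i, branch_eq c x' i]
    congr! 4 with z j hji
    rw [h j hji, hj j hji]

theorem exists_forall_branch_ne [Nonempty X] (c : X → X → C)
    (h : IsEmpty (X ↪ Σ i : I, Iio i → C)) : ∃ x, ∀ i : I, branch c x i ≠ x := by
  by_contra! hx
  choose i hi using hx
  -- `x` can be recovered from the place `i x` where its branch meets it and its colours up to there
  let colours (x : X) (k : I) : Iio k → C := fun j => c (branch c x j.1) x
  refine h.false ⟨fun x => ⟨i x, colours x (i x)⟩, fun x x' hxx' => ?_⟩
  obtain ⟨hii, hcolours⟩ := Sigma.mk.inj_iff.1 hxx'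
  rw [hii] at hcolours
  have hcol : colours x (i x') = colours x' (i x') := eq_of_heq hcolours
  calc x = branch c x (i x') := by rw [← hii, hi]
    _ = branch c x' (i x') :=
      branch_congr c fun j hj => congrFun hcol ⟨j, hj⟩
    _ = x' := hi x'

theorem exists_injective_endHomogeneous (c : X → X → C)
    (h : IsEmpty (X ↪ Σ i : I, Iio i → C)) :
    ∃ y : I → X, Injective y ∧ ∃ g : I → C, ∀ i j, i < j → c (y i) (y j) = g i := by
  have : Nonempty X := not_isEmpty_iff.1 fun _ => h.false .ofIsEmpty
  obtain ⟨x, hx⟩ := exists_forall_branch_ne c h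
  have hspec (i j : I) (hij : i < j) := branch_spec c (fun k _ => hx k) i hij
  exact ⟨branch c x, .of_lt_imp_ne fun i j hij => (hspec i j hij).1,
    fun i => c (branch c x i) x, fun i j hij => (hspec i j hij).2⟩

end ErdosRado

section Homogeneous

variable {X : Type u} {C : Type v}

/-- `A` is homogeneous of colour `t` for the colouring `c` of ordered pairs, with respect to some
well-order: it is contained in the range of a well-ordered sequence along which `c` is constantly
`t`. Repetitions in the sequence and a range larger than `A` are harmless, and the latter makes
heredity immediate. -/
def IsHomogeneous (c : X → X → C) (t : C) (A : Set X) : Prop :=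
  ∃ (I : Type u) (_ : LinearOrder I) (_ : WellFoundedLT I) (y : I → X),
    A ⊆ range y ∧ ∀ i j, i < j → c (y i) (y j) = t

theorem IsHomogeneous.subset {c : X → X → C} {t : C} {A B : Set X} (hB : IsHomogeneous c t B)
    (hAB : A ⊆ B) : IsHomogeneous c t A :=
  let ⟨I, hI, hI', y, hy, hc⟩ := hB
  ⟨I, hI, hI', y, hAB.trans hy, hc⟩

theorem IsHomogeneous.map {D : Type w} {c : X → X → C} {t : C} {A : Set X}
    (hA : IsHomogeneous c t A) (f : C → D) : IsHomogeneous (fun a b => f (c a b)) (f t) A :=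
  let ⟨I, hI, hI', y, hy, hc⟩ := hA
  ⟨I, hI, hI', y, hy, fun i j hij => congrArg f (hc i j hij)⟩

theorem mk_sigma_Iio_arrow_le {C : Type u} {ν : Cardinal.{u}} (hν : ℵ₀ ≤ ν) (hC : #C ≤ ν) :
    #(Σ i : (succ ν).ord.ToType, Iio i → C) ≤ 2 ^ ν := by
  have hIio (i : (succ ν).ord.ToType) : #(Iio i) ≤ ν :=
    lt_succ_iff.1 ((mk_Iio_lt i (by simp)).trans_eq (mk_ord_toType _))
  calc #(Σ i : (succ ν).ord.ToType, Iio i → C)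
      ≤ #(succ ν).ord.ToType * ⨆ i : (succ ν).ord.ToType, #(Iio i → C) := by
        rw [mk_sigma]
        exact sum_le_mk_mul_iSup _
    _ ≤ 2 ^ ν * 2 ^ ν := by
        gcongr
        · rw [mk_ord_toType]
          exact succ_le_of_lt (cantor ν)
        · exact ciSup_le' fun i => mk_arrow_le_two_power hν (hIio i) hC
    _ = 2 ^ ν := mul_eq_self (hν.trans (cantor ν).le)

theorem erdos_rado {C : Type u} (c : X → X → C) {B : Set X} {ν : Cardinal.{u}} (hν : ℵ₀ ≤ ν)
    (hC : #C ≤ ν) (hB : 2 ^ ν < #B) : ∃ A ⊆ B, #A = succ ν ∧ ∃ t, IsHomogeneous c t A := by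
  let I := (succ ν).ord.ToType
  have : IsRegularCardinalOrder I := isRegularCardinalOrder_ord_toType (isRegular_succ hν)
  have hI : #I = succ ν := mk_ord_toType _
  have hempty : IsEmpty (B ↪ Σ i : I, Iio i → C) :=
    ⟨fun e => ((mk_le_of_injective e.injective).trans (mk_sigma_Iio_arrow_le hν hC)).not_gt hB⟩
  obtain ⟨y, hy, g, hg⟩ := exists_injective_endHomogeneous (fun a b : B => c a b) hempty
  obtain ⟨ε, hε, t, ht⟩ := exists_strictMono_comp_eq_const g
    (hI ▸ lt_succ_of_le hC)
  refine ⟨range fun i => (y (ε i) : X), range_subset_iff.2 fun i => (y (ε i)).2, ?_, t,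
    I, _, inferInstance, _, subset_rfl, fun i j hij => (hg _ _ (hε hij)).trans (ht i)⟩
  exact (mk_range_eq _ (Subtype.val_injective.comp (hy.comp hε.injective))).trans hI

end Homogeneous

section Blocks

variable {X : Type u} {C : Type v} {I : Type w}

/-- The colour of a pair from two different members of the family `A`, taken in the order of the
indices, depends only on the indices. -/
def IsBlockwiseConstant [LT I] (c : X → X → C) (A : I → Set X) : Prop :=
  ∃ g : I → I → C, ∀ i j, i < j → ∀ a ∈ A i, ∀ b ∈ A j, c a b = g i j

theorem IsBlockwiseConstant.map {D : Type*} [LT I] {c : X → X → C} {A : I → Set X}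
    (hA : IsBlockwiseConstant c A) (f : C → D) : IsBlockwiseConstant (fun a b => f (c a b)) A :=
  let ⟨g, hg⟩ := hA
  ⟨fun i j => f (g i j), fun i j hij a ha b hb => congrArg f (hg i j hij a ha b hb)⟩

theorem IsBlockwiseConstant.comp_strictMono {J : Type*} [Preorder I] [Preorder J]
    {c : X → X → C} {A : I → Set X} (hA : IsBlockwiseConstant c A) {ε : J → I} (hε : StrictMono ε) :
    IsBlockwiseConstant c (A ∘ ε) :=
  let ⟨g, hg⟩ := hA
  ⟨fun i j => g (ε i) (ε j), fun i j hij => hg (ε i) (ε j) (hε hij)⟩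

theorem exists_isBlockwiseConstant_subsets {C I : Type u} [Preorder I] (c : X → X → C)
    {A : I → Set X} (hreg : ∀ i, (#(A i)).IsRegular)
    (hUnion : ∀ i, #((⋃ j : Iio i, A j) → C) < #(A i)) (hI : ∀ i, #(I → C) < #(A i)) :
    ∃ A' : I → Set X, (∀ i, A' i ⊆ A i) ∧ (∀ i, #(A' i) = #(A i)) ∧ IsBlockwiseConstant c A' := by
  choose D hDA hD hDconst using fun i => exists_subset_mk_eq_forall_eq (A i)
    (fun b (a : ⋃ j : Iio i, A j) => c a b) (hreg i) (hUnion i)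
  have hDne (i : I) : (D i).Nonempty := by
    rw [← nonempty_coe_sort, ← mk_ne_zero_iff, hD]
    exact (hreg i).ne_zero
  choose p hp using hDne
  have hcp (i j : I) (hij : i < j) (a : X) (ha : a ∈ A i) (b : X) (hb : b ∈ D j) :
      c a b = c a (p j) :=
    congrFun (hDconst j b hb (p j) (hp j)) ⟨a, mem_iUnion.2 ⟨⟨i, hij⟩, ha⟩⟩
  choose E hED hE hEconst using fun i => exists_subset_mk_eq_forall_eq (D i)
    (fun a (j : I) => c a (p j)) (by rw [hD]; exact hreg i) (by rw [hD]; exact hI i)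
  have hEne (i : I) : (E i).Nonempty := by
    rw [← nonempty_coe_sort, ← mk_ne_zero_iff, hE, hD]
    exact (hreg i).ne_zero
  choose q hq using hEne
  refine ⟨E, fun i => (hED i).trans (hDA i), fun i => (hE i).trans (hD i),
    fun i j => c (q i) (p j), fun i j hij a ha b hb => ?_⟩
  rw [hcp i j hij a (hDA i (hED i ha)) b (hED j hb)]
  exact congrFun (hEconst i a ha (q i) (hq i)) j

theorem exists_homogeneous_isBlockwiseConstant {C I : Type u} [Preorder I] (c : X → X → C)
    {m : I → Cardinal.{u}} (hm : ∀ i, ℵ₀ ≤ m i) (hC : ∀ i, #C ≤ m i) (hI : ∀ i, #I ≤ m i)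
    (hlt : ∀ i j, i < j → succ (2 ^ m i) ≤ m j) {B : I → Set X}
    (hB : ∀ i, 2 ^ (2 : Cardinal) ^ m i < #(B i)) :
    ∃ A : I → Set X, (∀ i, A i ⊆ B i) ∧ (∀ i, #(A i) = succ (2 ^ m i)) ∧
      (∀ i, ∃ t, IsHomogeneous c t (A i)) ∧ IsBlockwiseConstant c A := by
  have hν (i : I) : ℵ₀ ≤ (2 : Cardinal) ^ m i := (hm i).trans (cantor _).le
  choose H hHB hH t ht using fun i =>
    erdos_rado c (hν i) ((hC i).trans (cantor _).le) (hB i)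
  have hUnion (i : I) : #(⋃ j : Iio i, H j) ≤ m i := by
    refine (mk_iUnion_le _).trans (mul_le_of_le (hm i) ((mk_set_le _).trans (hI i)) ?_)
    exact ciSup_le' fun j => (hH j).trans_le (hlt j i j.2)
  obtain ⟨A, hAH, hA, hconst⟩ := exists_isBlockwiseConstant_subsets c
    (fun i => hH i ▸ isRegular_succ (hν i))
    (fun i => hH i ▸ lt_succ_of_le (mk_arrow_le_two_power (hm i) (hUnion i) (hC i)))
    (fun i => hH i ▸ lt_succ_of_le (mk_arrow_le_two_power (hm i) (hI i) (hC i)))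
  exact ⟨A, fun i => (hAH i).trans (hHB i), fun i => (hA i).trans (hH i),
    fun i => ⟨t i, (ht i).subset (hAH i)⟩, hconst⟩

end Blocks

section StrongLimit

variable {X C I : Type u} [LinearOrder I] [WellFoundedLT I] [IsRegularCardinalOrder I]
  {κ : Cardinal.{u}}

theorem exists_homogeneous_blocks_cofinal (hκ : κ.IsStrongLimit) (hsing : κ.ord.cof < κ)
    (hI : #I = κ.ord.cof) (hC : #C ≤ κ.ord.cof) (hX : κ ≤ #X) (c : X → X → C) :
    ∃ A : I → Set X, Pairwise (Disjoint on A) ∧ (∀ i, ∃ t, IsHomogeneous c t (A i)) ∧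
      IsBlockwiseConstant c A ∧ StrictMono (fun i => #(A i)) ∧ (∀ i, κ.ord.cof < #(A i)) ∧
      (∀ i, #(A i) < κ) ∧ ∀ μ < κ, ∃ i, μ ≤ #(A i) := by
  have hsucc {μ : Cardinal.{u}} (hμ : μ < κ) : succ (2 ^ μ) < κ :=
    hκ.isSuccLimit.succ_lt (hκ.isStrongPrelimit hμ)
  have hcof : ℵ₀ ≤ κ.ord.cof := (isRegular_cof (isSuccLimit_ord hκ.aleph0_le)).aleph0_le
  obtain ⟨m, hbm, hmκ, hlt, hmcof⟩ := exists_rapidly_increasing hI hsing @hsucc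
  obtain ⟨B, hBdisj, hB⟩ := exists_pairwise_disjoint_mk_eq (I := I) (X := X) (κ := κ)
    (by rwa [hI, mul_eq_right hκ.aleph0_le hsing.le (aleph0_pos.trans_le hcof).ne'])
  obtain ⟨A, hAB, hA, hhom, hconst⟩ := exists_homogeneous_isBlockwiseConstant c
    (fun i => hcof.trans (hbm i)) (fun i => hC.trans (hbm i)) (fun i => hI.le.trans (hbm i)) hlt
    (fun i => (hκ.isStrongPrelimit (hκ.isStrongPrelimit (hmκ i))).trans_eq (hB i).symm)
  have hmA (i : I) : m i < #(A i) := (cantor _).trans ((lt_succ _).trans_eq (hA i).symm)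
  exact ⟨A, fun i j hij => (hBdisj hij).mono (hAB i) (hAB j), hhom, hconst,
    fun i j hij => ((hA i).trans_le (hlt i j hij)).trans_lt (hmA j),
    fun i => (hbm i).trans_lt (hmA i), fun i => (hA i).trans_lt (hsucc (hmκ i)),
    fun μ hμ => (hmcof μ hμ).imp fun i hi => hi.trans (hmA i).le⟩

theorem exists_homogeneous_blocks_iSup_eq (hκ : κ.IsStrongLimit) (hsing : κ.ord.cof < κ)
    (hI : #I = κ.ord.cof) (hC : #C < κ.ord.cof) (hX : κ ≤ #X) (c : X → X → C) :
    ∃ A : I → Set X, Pairwise (Disjoint on A) ∧ (∃ t, ∀ i, IsHomogeneous c t (A i)) ∧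
      IsBlockwiseConstant c A ∧ StrictMono (fun i => #(A i)) ∧ (⨆ i, #(A i)) = κ ∧
      ∀ i, κ.ord.cof < #(A i) := by
  obtain ⟨A, hdisj, hhom, hconst, hmono, hcard, hlt, hcofinal⟩ :=
    exists_homogeneous_blocks_cofinal hκ hsing hI hC.le hX c
  choose t ht using hhom
  obtain ⟨ε, hε, t₀, ht₀⟩ := exists_strictMono_comp_eq_const t (hC.trans_eq hI.symm)
  refine ⟨A ∘ ε, hdisj.comp_of_injective hε.injective, ⟨t₀, fun i => ht₀ i ▸ ht (ε i)⟩,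
    hconst.comp_strictMono hε, hmono.comp hε, ?_, fun i => hcard (ε i)⟩
  refine (ciSup_le' fun i => (hlt (ε i)).le).antisymm (le_of_forall_lt fun μ hμ => ?_)
  obtain ⟨i, hi⟩ := hcofinal (succ μ) (hκ.isSuccLimit.succ_lt hμ)
  calc μ < #(A i) := succ_le_iff.1 hi
    _ ≤ #(A (ε i)) := hmono.monotone hε.le_apply
    _ ≤ ⨆ i, #(A (ε i)) := le_ciSup (f := fun i => #(A (ε i))) bddAbove_of_small i

end StrongLimit

end Canonization

namespace CompType

instance : Finite CompType :=
  .of_injective (β := Fin 3) (fun | .lt => 0 | .gt => 1 | .incomp => 2) fun s t h => by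
    cases s <;> cases t <;> simp_all

/-- The comparison type of the reversed pair. -/
def swap : CompType → CompType
  | .lt => .gt
  | .gt => .lt
  | .incomp => .incomp

variable {L : Type u} [PartialOrder L] {a b : L}

theorem rel_swap {t : CompType} : t.swap.rel a b ↔ t.rel b a := by
  cases t
  · exact .rfl
  · exact .rfl
  · exact and_comm

open Classical in
/-- The comparison type of two distinct elements, used as the colour of the pair; the value
`.incomp` on the diagonal is junk. -/
noncomputable def of (a b : L) : CompType :=
  if a < b then .lt else if b < a then .gt else .incomp

theorem rel_of (hab : a ≠ b) : (of a b).rel a b := by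
  unfold of
  split_ifs with hlt hgt
  · exact hlt
  · exact hgt
  · exact ⟨fun h => hlt (h.lt_of_ne hab), fun h => hgt (h.lt_of_ne hab.symm)⟩

theorem lt_of_of_eq_lt (h : of a b = .lt) : a < b := by
  have hab : a ≠ b := by rintro rfl; simp [of] at h
  exact (h ▸ rel_of hab : CompType.lt.rel a b)

theorem gt_of_of_eq_gt (h : of a b = .gt) : b < a := by
  have hab : a ≠ b := by rintro rfl; simp [of] at h
  exact (h ▸ rel_of hab : CompType.gt.rel a b)

end CompType

namespace Canonization

open Set Order Function

section PartialOrder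

variable {L : Type u} [PartialOrder L]

theorem isWellChain_of_isHomogeneous {A : Set L} (hA : IsHomogeneous CompType.of .lt A) :
    IsWellChain A := by
  obtain ⟨I, _, _, y, hAy, hc⟩ := hA
  have hy : StrictMono y := fun i j hij => CompType.lt_of_of_eq_lt (hc i j hij)
  refine ⟨hy.monotone.isChain_range.mono hAy, .subset (wellFoundedOn_range.2 ?_) hAy⟩
  exact wellFounded_lt.mono fun i j => hy.lt_iff_lt.1

theorem isCoWellChain_of_isHomogeneous {A : Set L} (hA : IsHomogeneous CompType.of .gt A) :
    IsCoWellChain A := by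
  obtain ⟨I, _, _, y, hAy, hc⟩ := hA
  have hy : StrictAnti y := fun i j hij => CompType.gt_of_of_eq_gt (hc i j hij)
  refine ⟨hy.antitone.isChain_range.mono hAy, .subset (wellFoundedOn_range.2 ?_) hAy⟩
  exact wellFounded_lt.mono fun i j => hy.lt_iff_gt.1

theorem isAntichain_of_isHomogeneous {A : Set L} (hA : IsHomogeneous CompType.of .incomp A) :
    IsAntichain (· ≤ ·) A := by
  obtain ⟨I, _, _, y, hAy, hc⟩ := hA
  refine IsAntichain.subset ?_ hAy
  rintro _ ⟨i, rfl⟩ _ ⟨j, rfl⟩ hne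
  have hrel (i j : I) (hij : i < j) (hne : y i ≠ y j) : CompType.incomp.rel (y i) (y j) :=
    hc i j hij ▸ CompType.rel_of hne
  rcases lt_trichotomy i j with hij | rfl | hji
  · exact (hrel i j hij hne).1
  · exact absurd rfl hne
  · exact (hrel j i hji hne.symm).2

theorem isCanonical_of_isHomogeneous {I : Type*} [LinearOrder I] {A : I → Set L} {t : CompType}
    (hdisj : Pairwise (Disjoint on A)) (hhom : ∀ i, IsHomogeneous CompType.of t (A i))
    (hconst : IsBlockwiseConstant CompType.of A) : IsCanonical A := by
  constructor
  · cases t with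
    | lt => exact .inr (.inl fun i => isWellChain_of_isHomogeneous (hhom i))
    | gt => exact .inr (.inr fun i => isCoWellChain_of_isHomogeneous (hhom i))
    | incomp => exact .inl fun i => isAntichain_of_isHomogeneous (hhom i)
  · obtain ⟨g, hg⟩ := hconst
    have hrel (i j : I) (hij : i < j) (a : L) (ha : a ∈ A i) (b : L) (hb : b ∈ A j) :
        (g i j).rel a b :=
      hg i j hij a ha b hb ▸ CompType.rel_of ((hdisj hij.ne).ne_of_mem ha hb)
    refine ⟨fun i j => if i < j then g i j else (g j i).swap, fun i j hij a ha b hb => ?_⟩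
    rcases hij.lt_or_gt with hij | hji
    · simpa only [if_pos hij] using hrel i j hij a ha b hb
    · simpa only [if_neg hji.not_gt, CompType.rel_swap] using hrel j i hji b hb a ha

end PartialOrder

end Canonization

open Canonization in
theorem canonization_general (L : Type u) [PartialOrder L] (κ : Cardinal.{u})
    (hκ : κ.IsStrongLimit) (hsing : κ.ord.cof < κ) (hL : κ ≤ #L) :
    ∃ A : {ζ : Ordinal.{u} // ζ < (κ.ord.cof).ord} → Set L,
      Pairwise (Function.onFun Disjoint A) ∧ IsCanonical A ∧
      StrictMono (fun ζ => #(A ζ)) ∧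
      (⨆ ζ, #(A ζ)) = κ ∧
      ∀ ζ, κ.ord.cof < #(A ζ) := by
  let I := κ.ord.cof.ord.ToType
  have hreg : κ.ord.cof.IsRegular := isRegular_cof (isSuccLimit_ord hκ.aleph0_le)
  have : IsRegularCardinalOrder I := isRegularCardinalOrder_ord_toType hreg
  have hcolours : #(ULift.{u} CompType) < κ.ord.cof := mk_lt_aleph0.trans_le hreg.aleph0_le
  obtain ⟨A, hdisj, ⟨t, hhom⟩, hconst, hmono, hsup, hcard⟩ := exists_homogeneous_blocks_iSup_eq
    (I := I) hκ hsing (mk_ord_toType _) hcolours hL fun a b => ULift.up (CompType.of a b)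
  let e : {ζ : Ordinal.{u} // ζ < κ.ord.cof.ord} ≃o I := Ordinal.ToType.mk
  refine ⟨A ∘ e, hdisj.comp_of_injective e.injective, ?_, hmono.comp e.strictMono,
    (e.toEquiv.iSup_comp (g := fun i => #(A i))).trans hsup, fun ζ => hcard (e ζ)⟩
  exact isCanonical_of_isHomogeneous (hdisj.comp_of_injective e.injective)
    (fun ζ => (hhom (e ζ)).map ULift.down) ((hconst.map ULift.down).comp_strictMono e.strictMono)

/-- Canonization: if `κ` is a singular strong limit cardinal with cofinality `λ < κ` and
`|L| = κ`, then there is a pairwise disjoint canonical family `(A_ζ)_{ζ<λ}` of subsets of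
`L` whose cardinalities are strictly increasing with supremum `κ`, each of size `> λ`. -/
theorem canonization (L : Type u) [PartialOrder L] (κ : Cardinal.{u})
    (hκ : κ.IsStrongLimit) (hsing : κ.ord.cof < κ) (hL : #L = κ) :
    ∃ A : {ζ : Ordinal.{u} // ζ < (κ.ord.cof).ord} → Set L,
      Pairwise (Function.onFun Disjoint A) ∧ IsCanonical A ∧
      StrictMono (fun ζ => #(A ζ)) ∧
      (⨆ ζ, #(A ζ)) = κ ∧
      ∀ ζ, κ.ord.cof < #(A ζ) :=
  canonization_general L κ hκ hsing hL.ge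
end

section
/- Let L be a partial order and let Ā ⊆ L be a subset which, with the induced order, is a complete lattice (least upper bounds are taken inside Ā; they need not be least upper bounds in L). Then for every A ⊆ Ā, ν(L) ≥ ν(A), where ν(A) is computed for A with the induced order. -/
universe u v w

open Cardinal

/-!
Let `K` be a complete lattice embedded in `S`, let `Q` be embedded in `K` and `P` in `R`. A monotone
`f : P → Q ⊆ K` extends to `R` by `x ↦ sup {f a | a ≤ x}`, the supremum being taken in `K`. The
extension is monotone in `x` and in `f` and agrees with `f` on `P`, so it embeds the order of
monotone maps `P → Q` into that of monotone maps `R → S` and carries antichains to antichains of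
the same size.
-/

section Nu2

variable {P : Type*} {Q : Type*}

theorem exists_antichain_monotone_iff_exists_antichain_orderHom [Preorder P] [Preorder Q]
    {c : Cardinal} :
    (∃ s : Set (P → Q), (∀ f ∈ s, Monotone f) ∧ IsAntichain (· ≤ ·) s ∧ #s = c) ↔
      ∃ s : Set (P →o Q), IsAntichain (· ≤ ·) s ∧ #s = c := by
  have coe_injective : Function.Injective ((⇑) : (P →o Q) → P → Q) := DFunLike.coe_injective
  constructor
  · rintro ⟨s, monotone_of_mem, hs, rfl⟩
    refine ⟨(⇑) ⁻¹' s, hs.preimage coe_injective fun _ _ h ↦ h, ?_⟩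
    exact mk_preimage_of_injective_of_subset_range _ s coe_injective
      fun f hf ↦ ⟨⟨f, monotone_of_mem f hf⟩, rfl⟩
  · rintro ⟨s, hs, rfl⟩
    exact ⟨(⇑) '' s, Set.forall_mem_image.2 fun f _ ↦ f.monotone, hs.image _ fun _ _ h ↦ h,
      mk_image_eq coe_injective⟩

theorem lt_nu2_iff [PartialOrder P] [PartialOrder Q] {c : Cardinal} :
    c < nu2 P Q ↔ ∃ s : Set (P →o Q), IsAntichain (· ≤ ·) s ∧ #s = c := by
  simp only [nu2, exists_antichain_monotone_iff_exists_antichain_orderHom]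
  refine ⟨fun h ↦ not_not.1 (notMem_of_lt_csInf' h), ?_⟩
  rintro ⟨s, hs, rfl⟩
  have no_antichain_succ : Order.succ #(P →o Q) ∈
      {c : Cardinal | ¬ ∃ t : Set (P →o Q), IsAntichain (· ≤ ·) t ∧ #t = c} := by
    rintro ⟨t, -, ht⟩
    exact (Order.lt_succ #(P →o Q)).not_ge (ht ▸ mk_set_le t)
  refine lt_of_not_ge fun le_card ↦ ?_
  obtain ⟨t, hts, ht⟩ := le_mk_iff_exists_subset.1 le_card
  exact csInf_mem ⟨_, no_antichain_succ⟩ ⟨t, hs.subset hts, ht⟩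

end Nu2

section OrderHomEmbedding

variable {P : Type*} {Q : Type*} {R : Type*} {S : Type*} {K : Type*}

/-- Postcomposition with an order embedding, as an order embedding of pointwise ordered monotone
maps. -/
def orderHomPostcomp (P : Type*) [Preorder P] [Preorder Q] [Preorder S] (k : Q ↪o S) :
    (P →o Q) ↪o (P →o S) where
  toFun f := k.toOrderHom.comp f
  inj' _ _ h := OrderHom.ext _ _ (funext fun a ↦ k.injective (DFunLike.congr_fun h a))
  map_rel_iff' := forall_congr' fun _ ↦ k.le_iff_le

/-- The left Kan extension of `f : P → K` along `i : P → R`: the least monotone `g : R → K` with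
`f ≤ g ∘ i`. -/
def leftKanExtension [Preorder R] [CompleteLattice K] (i : P → R) (f : P → K) : R →o K where
  toFun x := ⨆ (a) (_ : i a ≤ x), f a
  monotone' _ _ hxy := biSup_mono fun _ hax ↦ hax.trans hxy

theorem le_leftKanExtension_apply [Preorder R] [CompleteLattice K] (i : P → R) (f : P → K)
    (a : P) : f a ≤ leftKanExtension i f (i a) :=
  le_iSup₂_of_le a le_rfl le_rfl

theorem leftKanExtension_le_iff [Preorder R] [CompleteLattice K] {i : P → R} {f : P → K}
    {g : R →o K} : leftKanExtension i f ≤ g ↔ ∀ a, f a ≤ g (i a) :=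
  ⟨fun h a ↦ (le_leftKanExtension_apply i f a).trans (h (i a)),
    fun h _ ↦ iSup₂_le fun a hax ↦ (h a).trans (g.monotone hax)⟩

theorem leftKanExtension_apply_embedding [Preorder P] [Preorder R] [CompleteLattice K]
    (i : P ↪o R) (f : P →o K) (a : P) : leftKanExtension i f (i a) = f a :=
  le_antisymm (iSup₂_le fun _ h ↦ f.monotone (i.le_iff_le.1 h)) (le_leftKanExtension_apply i f a)

/-- Left Kan extension along an order embedding, as an order embedding of pointwise ordered monotone
maps. -/
def leftKanExtensionEmbedding (K : Type*) [Preorder P] [Preorder R] [CompleteLattice K]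
    (i : P ↪o R) : (P →o K) ↪o (R →o K) :=
  OrderEmbedding.ofMapLEIff (fun f ↦ leftKanExtension i f) fun f g ↦
    leftKanExtension_le_iff.trans <| by
      simp only [leftKanExtension_apply_embedding, OrderHom.le_def]

end OrderHomEmbedding

section Comparison

universe uP uQ uR uS

variable {P : Type uP} {Q : Type uQ} {R : Type uR} {S : Type uS}
  [PartialOrder P] [PartialOrder Q] [PartialOrder R] [PartialOrder S]

theorem lift_nu2_le_lift_nu2_of_orderEmbedding (e : (P →o Q) ↪o (R →o S)) :
    lift.{max uR uS} (nu2 P Q) ≤ lift.{max uP uQ} (nu2 R S) := by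
  refine le_of_forall_lt fun c hc ↦ ?_
  obtain ⟨_, hd, rfl⟩ := lt_lift_iff.1 hc
  obtain ⟨s, hs, rfl⟩ := lt_nu2_iff.1 hd
  rw [← mk_image_eq_lift e s e.injective, lift_lt]
  exact lt_nu2_iff.2 ⟨e '' s, hs.image_embedding e, rfl⟩

theorem nu_ge_of_subset_complete_general {K : Type*} [CompleteLattice K]
    (i : P ↪o R) (j : Q ↪o K) (k : K ↪o S) :
    lift.{max uR uS} (nu2 P Q) ≤ lift.{max uP uQ} (nu2 R S) :=
  lift_nu2_le_lift_nu2_of_orderEmbedding <|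
    ((orderHomPostcomp P j).comp (leftKanExtensionEmbedding K i)).comp (orderHomPostcomp R k)

end Comparison

/-- The complete lattice structure on a partial order in which every subset has a least upper bound,
with the suprema picked by choice. It keeps the given order. -/
noncomputable abbrev completeLatticeOfExistsIsLUB {K : Type*} [PartialOrder K]
    (h : ∀ s : Set K, ∃ a, IsLUB s a) : CompleteLattice K :=
  letI : SupSet K := ⟨fun s ↦ (h s).choose⟩
  completeLatticeOfSup K fun s ↦ (h s).choose_spec

/-- If `Ā ⊆ L` is complete as a partial order (every subset has a least upper bound inside
`Ā`), then `ν(L) ≥ ν(A)` for every `A ⊆ Ā`. -/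
theorem nu_ge_of_subset_complete (L : Type u) [PartialOrder L] (Abar : Set L)
    (hcomp : ∀ S : Set ↥Abar, ∃ a : ↥Abar, IsLUB S a)
    (A : Set L) (hA : A ⊆ Abar) :
    nu ↥A ≤ nu L := by
  let := completeLatticeOfExistsIsLUB hcomp
  simpa only [nu, lift_id] using nu_ge_of_subset_complete_general (OrderEmbedding.subtype (· ∈ A))
    (Subtype.orderEmbedding hA) (OrderEmbedding.subtype (· ∈ Abar))
end

section
/- Let L be a partial order, let (A_i)_{i<λ} be a canonical family of pairwise disjoint subsets of L, and let A = ⋃_{i<λ} A_i. If κ_i < ν(A_i) for every i < λ, then ν(A) > ∏_{i<λ} κ_i. -/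
universe u v w

open Cardinal

/-!
Choose in each block an antichain of `κ i` monotone maps. Selecting one map per block and gluing
yields a map on the union, which is monotone because comparisons between distinct blocks do not
depend on the chosen elements. Gluing is an order embedding of the product of the function spaces,
and it turns the product of the chosen antichains, again an antichain, into the required family.
-/

theorem CompType.le_of_rel_of_rel {L : Type u} [PartialOrder L] {c : CompType} {a b a' b' : L}
    (h : c.rel a b) (h' : c.rel a' b') (hab : a ≤ b) : a' ≤ b' := by
  cases c with
  | lt => exact le_of_lt h'
  | gt => exact absurd hab (not_le_of_gt h)
  | incomp => exact absurd hab h.1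

theorem IsCanonical.pairwise_le_of_le {L : Type u} [PartialOrder L] {ι : Type v} {A : ι → Set L}
    (hA : IsCanonical A) :
    Pairwise fun i j => ∀ a ∈ A i, ∀ a' ∈ A j, a ≤ a' → ∀ b ∈ A i, ∀ b' ∈ A j, b ≤ b' := by
  obtain ⟨-, F, hF⟩ := hA
  intro i j hij a ha a' ha' haa' b hb b' hb'
  exact CompType.le_of_rel_of_rel (hF i j hij a ha a' ha') (hF i j hij b hb b' hb') haa'

theorem isAntichain_univ_pi {ι : Type w} {α : ι → Type u} [∀ i, LE (α i)]
    {S : ∀ i, Set (α i)} (hS : ∀ i, IsAntichain (· ≤ ·) (S i)) :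
    IsAntichain (· ≤ ·) (Set.univ.pi S) := fun _ hf _ hg hne hfg =>
  hne <| funext fun i => (hS i).eq (hf i trivial) (hg i trivial) (hfg i)

theorem mk_univ_pi {ι : Type w} {α : ι → Type u} (S : ∀ i, Set (α i)) :
    #(Set.univ.pi S) = Cardinal.prod fun i => #(S i) := by
  rw [mk_congr (Equiv.Set.univPi S), mk_pi]

section Nu

variable {L₁ : Type u} {L₂ : Type v} [PartialOrder L₁] [PartialOrder L₂]

theorem exists_antichain_of_lt_nu2 {n : Cardinal.{max u v}} (hn : n < nu2 L₁ L₂) :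
    ∃ S : Set (L₁ → L₂), (∀ f ∈ S, Monotone f) ∧ IsAntichain (· ≤ ·) S ∧ #S = n :=
  not_not.1 (notMem_of_lt_csInf' hn)

theorem mk_lt_nu2 {S : Set (L₁ → L₂)} (hmono : ∀ f ∈ S, Monotone f)
    (hanti : IsAntichain (· ≤ ·) S) : #S < nu2 L₁ L₂ := by
  -- Guards against the junk value `sInf ∅ = 0` in the definition of `nu2`.
  have hne : {n : Cardinal.{max u v} | ¬ ∃ T : Set (L₁ → L₂),
      (∀ f ∈ T, Monotone f) ∧ IsAntichain (· ≤ ·) T ∧ #T = n}.Nonempty := by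
    refine ⟨Order.succ #(L₁ → L₂), ?_⟩
    rintro ⟨T, -, -, hT⟩
    exact (Order.lt_succ #(L₁ → L₂)).not_ge (hT ▸ mk_set_le T)
  by_contra! hle
  obtain ⟨T, hTS, hT⟩ := le_mk_iff_exists_subset.1 hle
  exact csInf_mem hne ⟨T, fun f hf => hmono f (hTS hf), hanti.subset hTS, hT⟩

end Nu

section Glue

variable {ι : Type w} {L₁ : Type u} {L₂ : Type v} {A : ι → Set L₁} {B : ι → Set L₂}

/-- The map `⋃ i, A i → ⋃ i, B i` that agrees with `f i` on each block `A i` of a pairwise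
disjoint family. -/
noncomputable def glue (hA : Pairwise (Function.onFun Disjoint A)) (f : ∀ i, A i → B i) :
    ↥(⋃ i, A i) → ↥(⋃ i, B i) :=
  Set.iUnionLift A (fun i a => Set.inclusion (Set.subset_iUnion B i) (f i a))
    (fun i j x hi hj => by
      obtain rfl : i = j := hA.eq (Set.not_disjoint_iff.2 ⟨x, hi, hj⟩)
      rfl)
    _ subset_rfl

theorem coe_glue_of_mem (hA : Pairwise (Function.onFun Disjoint A)) (f : ∀ i, A i → B i) {i : ι}
    (x : ↥(⋃ i, A i)) (hx : (x : L₁) ∈ A i) : (glue hA f x : L₂) = f i ⟨x, hx⟩ :=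
  congrArg Subtype.val (Set.iUnionLift_of_mem x hx)

theorem glue_le_glue_iff [Preorder L₂] (hA : Pairwise (Function.onFun Disjoint A))
    {f g : ∀ i, A i → B i} : glue hA f ≤ glue hA g ↔ f ≤ g := by
  constructor
  · intro h i a
    have ha := h ⟨a, Set.mem_iUnion_of_mem i a.2⟩
    rwa [← Subtype.coe_le_coe, coe_glue_of_mem hA f _ a.2, coe_glue_of_mem hA g _ a.2] at ha
  · intro h x
    obtain ⟨i, hi⟩ := Set.mem_iUnion.1 x.2
    rw [← Subtype.coe_le_coe, coe_glue_of_mem hA f x hi, coe_glue_of_mem hA g x hi]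
    exact h i ⟨x, hi⟩

/-- Gluing as an order embedding of the product of the function spaces `A i → B i` into the
functions between the unions, both ordered pointwise. -/
noncomputable def glueEmbedding [PartialOrder L₂] (hA : Pairwise (Function.onFun Disjoint A)) :
    (∀ i, A i → B i) ↪o (↥(⋃ i, A i) → ↥(⋃ i, B i)) :=
  OrderEmbedding.ofMapLEIff (glue hA) fun _ _ => glue_le_glue_iff hA

theorem monotone_glue [Preorder L₁] [Preorder L₂]
    (hA : Pairwise (Function.onFun Disjoint A))
    (hAB : Pairwise fun i j => ∀ a ∈ A i, ∀ a' ∈ A j, a ≤ a' → ∀ b ∈ B i, ∀ b' ∈ B j, b ≤ b')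
    {f : ∀ i, A i → B i} (hf : ∀ i, Monotone (f i)) : Monotone (glue hA f) := by
  intro x y hxy
  obtain ⟨i, hi⟩ := Set.mem_iUnion.1 x.2
  obtain ⟨j, hj⟩ := Set.mem_iUnion.1 y.2
  rw [← Subtype.coe_le_coe, coe_glue_of_mem hA f x hi, coe_glue_of_mem hA f y hj]
  rcases eq_or_ne i j with rfl | hij
  · exact hf i (Subtype.mk_le_mk.2 hxy)
  · exact hAB hij x hi y hj hxy _ (f i ⟨x, hi⟩).2 _ (f j ⟨y, hj⟩).2

end Glue

theorem independence_nu_prod_general {ι : Type w} {L₁ : Type u} {L₂ : Type v} [PartialOrder L₁]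
    [PartialOrder L₂] {A : ι → Set L₁} {B : ι → Set L₂}
    (hA : Pairwise (Function.onFun Disjoint A))
    (hAB : Pairwise fun i j => ∀ a ∈ A i, ∀ a' ∈ A j, a ≤ a' → ∀ b ∈ B i, ∀ b' ∈ B j, b ≤ b')
    {κ : ι → Cardinal.{max u v}} (hκ : ∀ i, κ i < nu2 (A i) (B i)) :
    Cardinal.prod κ < Cardinal.lift.{w} (nu2 ↥(⋃ i, A i) ↥(⋃ i, B i)) := by
  choose S hmono hanti hcard using fun i => exists_antichain_of_lt_nu2 (hκ i)
  set G := glueEmbedding (B := B) hA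
  have hG : #(G '' Set.univ.pi S) < nu2 ↥(⋃ i, A i) ↥(⋃ i, B i) := by
    refine mk_lt_nu2 ?_ ((isAntichain_univ_pi hanti).image_embedding G)
    rintro _ ⟨f, hf, rfl⟩
    exact monotone_glue hA hAB fun i => hmono i (f i) (hf i trivial)
  calc Cardinal.prod κ = #(Set.univ.pi S) := by simp only [mk_univ_pi, hcard]
    _ = Cardinal.lift.{w} #(G '' Set.univ.pi S) := by
      rw [← Cardinal.lift_umax.{max u v, w}, mk_image_eq_lift G _ G.injective,
        Cardinal.lift_id'.{max u v, w}]
    _ < _ := Cardinal.lift_lt.2 hG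

/-- Independence lemma, part 4: for a pairwise disjoint canonical family `(A_i)_{i<λ}`,
if `κ_i < ν(A_i)` for all `i`, then `ν(⋃ A_i) > ∏ κ_i`. -/
theorem independence_nu_prod (L : Type u) [PartialOrder L] {ι : Type u} (A : ι → Set L)
    (hdisj : Pairwise (Function.onFun Disjoint A)) (hcan : IsCanonical A)
    (κ : ι → Cardinal.{u}) (hκ : ∀ i, κ i < nu ↥(A i)) :
    Cardinal.prod κ < nu ↥(⋃ i, A i) := by
  simpa only [nu, Cardinal.lift_id] using
    independence_nu_prod_general hdisj hcan.pairwise_le_of_le hκ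
end
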